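/- Let A be a multiplicative subgroup of Z_p^* with |A| ≪ p^{2/3}. If |A| ≪ p^{5/9} (log|A|)^{-1/18}, then |2A| ≫ |A|^{8/5} (log|A|)^{-3/10}; and if |A| ≫ p^{5/9}(log|A|)^{-1/18}, then |2A| ≫ |A| p^{1/3} (log|A|)^{-1/3}. -/

import Mathlib

open Finset Pointwise

/-- `A` is (the underlying set of) a multiplicative subgroup of `ℤ_p^*`. -/
def mulSubgroup (p : ℕ) (A : Finset (ZMod p)) : Prop :=
  (0 : ZMod p) ∉ A ∧ (1 : ZMod p) ∈ A ∧
    (∀ x ∈ A, ∀ y ∈ A, x * y ∈ A) ∧ ∀ x ∈ A, x⁻¹ ∈ A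


namespace Stmt6
open Polynomial

variable {p : ℕ} [Fact p.Prime]

theorem sparse_zero (s : ℕ) : ∀ F : (ZMod p)[X], F.natDegree < p → F.support.card ≤ s →
    (X - 1) ^ s ∣ F → F = 0 := by
  induction s with
  | zero =>
    intro F _ h _
    simpa using h
  | succ s ih =>
    intro F hd hs hdiv
    by_contra hF
    obtain ⟨e, he⟩ := (Polynomial.support_nonempty (p := F)).2 hF
    have hcoeff : ∀ i : ℕ, (X * derivative F - C (e : ZMod p) * F).coeff i
        = ((i : ZMod p) - e) * F.coeff i := by
      intro i
      rw [coeff_sub, coeff_C_mul]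
      rcases i with _ | i
      · simp
      · rw [coeff_X_mul, coeff_derivative]; push_cast; ring
    have hG0 : X * derivative F - C (e : ZMod p) * F = 0 := by
      apply ih
      · refine lt_of_le_of_lt ?_ hd
        rw [natDegree_le_iff_coeff_eq_zero]
        intro N hN
        rw [hcoeff, coeff_eq_zero_of_natDegree_lt hN, mul_zero]
      · have : (X * derivative F - C (e : ZMod p) * F).support ⊆ F.support.erase e := by
          intro i hi
          rw [mem_support_iff, hcoeff] at hi
          rw [Finset.mem_erase, mem_support_iff]
          refine ⟨?_, right_ne_zero_of_mul hi⟩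
          rintro rfl
          simp at hi
        have h2 := Finset.card_le_card this
        rw [Finset.card_erase_of_mem he] at h2
        omega
      · apply dvd_sub
        · apply Dvd.dvd.mul_left
          obtain ⟨G, rfl⟩ := hdiv
          rw [derivative_mul, derivative_pow]
          simp only [Nat.add_sub_cancel]
          apply dvd_add
          · refine Dvd.dvd.mul_right ?_ _
            refine Dvd.dvd.mul_right ?_ _
            exact Dvd.intro_left _ rfl
          · exact Dvd.dvd.mul_right (pow_dvd_pow _ (Nat.le_succ _)) _
        · exact Dvd.dvd.mul_left ((pow_dvd_pow _ (Nat.le_succ _)).trans hdiv) _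
    have hsupp : ∀ i : ℕ, i ≠ e → F.coeff i = 0 := by
      intro i hie
      have h1 := hcoeff i
      rw [hG0, coeff_zero] at h1
      rcases mul_eq_zero.1 h1.symm with h | h
      · by_contra hne
        have hi : i < p := lt_of_le_of_lt (le_natDegree_of_ne_zero hne) hd
        have he' : e < p := lt_of_le_of_lt (le_natDegree_of_ne_zero (mem_support_iff.1 he)) hd
        have h3 : (i : ZMod p) = e := sub_eq_zero.1 h
        rw [ZMod.natCast_eq_natCast_iff'] at h3
        rw [Nat.mod_eq_of_lt hi, Nat.mod_eq_of_lt he'] at h3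
        exact hie h3
      · exact h
    have hFm : F = monomial e (F.coeff e) := by
      ext i
      rw [coeff_monomial]
      split_ifs with h
      · rw [h]
      · exact hsupp i (Ne.symm h)
    have hroot : F.eval 1 = 0 := by
      obtain ⟨G, hG⟩ := hdiv
      rw [hG]; simp
    rw [hFm] at hroot
    simp at hroot
    exact (mem_support_iff.1 he) hroot

/-- the derivation `X(1-X) d/dX` -/
noncomputable def th : (ZMod p)[X] →ₗ[ZMod p] (ZMod p)[X] :=
  (LinearMap.mulLeft (ZMod p) (X * (1 - X))) ∘ₗ derivative

noncomputable def Top (u v : ℕ) : (ZMod p)[X] →ₗ[ZMod p] (ZMod p)[X] :=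
  th + LinearMap.mulLeft (ZMod p) ((u : (ZMod p)[X]) * (1 - X) - (v : (ZMod p)[X]) * X)

theorem th_apply (P : (ZMod p)[X]) : th P = X * (1 - X) * derivative P := rfl
theorem Top_apply (u v : ℕ) (P : (ZMod p)[X]) :
    Top u v P = X * (1 - X) * derivative P + ((u : (ZMod p)[X]) * (1 - X) - (v : (ZMod p)[X]) * X) * P := rfl

theorem mult_lemma (x : ZMod p) (hx0 : x ≠ 0) (hx1 : 1 - x ≠ 0) (D : ℕ) : D ≤ p →
    ∀ F : (ZMod p)[X], (∀ j < D, ((th ^ j) F).eval x = 0) → (X - C x) ^ D ∣ F := by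
  induction D with
  | zero => intro _ F _; simp
  | succ D ih =>
    intro hD F h
    have h1 : (X - C x) ^ D ∣ F := ih (by omega) F (fun j hj => h j (by omega))
    have h2 : (X - C x) ^ D ∣ th F := ih (by omega) (th F) (fun j hj => by
      have := h (j+1) (by omega)
      rwa [pow_succ, Module.End.mul_apply] at this)
    rcases D with _ | D
    · have := h 0 (by omega)
      rw [zero_add, pow_one, dvd_iff_isRoot]
      simpa using this
    · obtain ⟨G, rfl⟩ := h1
      rw [th_apply, derivative_mul, derivative_pow] at h2
      simp only [Nat.add_sub_cancel] at h2
      have h3 : (X - C x) ^ (D+1) ∣ (X - C x) ^ D * (C ((D + 1 : ℕ) : ZMod p) * X * (1 - X) * G) := by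
        have h4 : (X - C x) ^ (D+1) ∣ (X - C x) ^ (D+1) * (X * (1 - X) * derivative G) :=
          Dvd.intro _ rfl
        have := dvd_sub h2 h4
        convert this using 1
        simp
        ring
      rw [pow_succ, mul_dvd_mul_iff_left (pow_ne_zero _ (X_sub_C_ne_zero x)), dvd_iff_isRoot] at h3
      simp only [IsRoot, eval_mul, eval_C, eval_X, eval_sub, eval_one] at h3
      have hD' : ((D + 1 : ℕ) : ZMod p) ≠ 0 := by
        intro h0
        rw [ZMod.natCast_eq_zero_iff] at h0
        have := Nat.le_of_dvd (by omega) h0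
        omega
      have hG : G.eval x = 0 := by
        rcases mul_eq_zero.1 h3 with h5 | h5
        · exfalso
          exact (mul_ne_zero (mul_ne_zero hD' hx0) hx1) h5
        · exact h5
      rw [pow_succ (X - C x) (D+1)]
      exact mul_dvd_mul_left _ (dvd_iff_isRoot.2 hG)

theorem th_Top (u v : ℕ) (P : (ZMod p)[X]) :
    th (P * (X ^ u * (1 - X) ^ v)) = Top u v P * (X ^ u * (1 - X) ^ v) := by
  rw [th_apply, Top_apply, derivative_mul, derivative_mul, derivative_pow, derivative_pow]
  have e1 : (X : (ZMod p)[X]) * (C (u : ZMod p) * X ^ (u - 1)) = (u : (ZMod p)[X]) * X ^ u := by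
    rcases u with _ | u
    · simp
    · simp; ring
  have e2 : (1 - X : (ZMod p)[X]) * (C (v : ZMod p) * (1 - X) ^ (v - 1)) = (v : (ZMod p)[X]) * (1 - X) ^ v := by
    rcases v with _ | v
    · simp
    · simp; ring
  simp only [derivative_X, derivative_sub, derivative_one]
  linear_combination (P * (1 - X) ^ v * (1 - X)) * e1 - (P * X ^ u * X) * e2

theorem th_pow_Top (u v : ℕ) (P : (ZMod p)[X]) (j : ℕ) :
    (th ^ j) (P * (X ^ u * (1 - X) ^ v)) = ((Top u v) ^ j) P * (X ^ u * (1 - X) ^ v) := by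
  induction j with
  | zero => simp
  | succ j ih =>
    rw [pow_succ', Module.End.mul_apply, ih, th_Top, pow_succ', Module.End.mul_apply]

theorem Top_deg (u v : ℕ) (P : (ZMod p)[X]) (d : ℕ) (h : P.natDegree ≤ d) :
    (Top u v P).natDegree ≤ d + 1 := by
  rw [Top_apply]
  apply natDegree_add_le_of_degree_le
  · by_cases h0 : derivative P = 0
    · simp [h0]
    · have hP : P.natDegree ≠ 0 := by
        intro h1
        apply h0
        rw [eq_C_of_natDegree_eq_zero h1]; simp
      have := natDegree_derivative_lt hP
      have h2 : (X * (1 - X) : (ZMod p)[X]).natDegree ≤ 2 := by compute_degree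
      exact natDegree_mul_le.trans (by omega)
  · have h2 : ((u : (ZMod p)[X]) * (1 - X) - (v : (ZMod p)[X]) * X).natDegree ≤ 1 := by compute_degree
    exact natDegree_mul_le.trans (by omega)

theorem Top_pow_deg (u v : ℕ) (P : (ZMod p)[X]) (d j : ℕ) (h : P.natDegree ≤ d) :
    (((Top u v) ^ j) P).natDegree ≤ d + j := by
  induction j with
  | zero => simpa using h
  | succ j ih =>
    rw [pow_succ', Module.End.mul_apply]
    exact Top_deg _ _ _ _ ih

end Stmt6


namespace Stmt6
open Polynomial

variable {p : ℕ} [Fact p.Prime]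

theorem psi_indep (n A B : ℕ) (hB : 0 < B) (hAB : A * B ≤ n) (hp : n * B ≤ p)
    (l : Fin A × Fin B × Fin B → ZMod p)
    (h : ∑ i : Fin A × Fin B × Fin B, l i • ((X : (ZMod p)[X]) ^ (i.1 : ℕ) *
      (X ^ (n * (i.2.2 : ℕ)) * (1 - X) ^ (n * (i.2.1 : ℕ)))) = 0) : l = 0 := by
  have hAn : A ≤ n := (Nat.le_mul_of_pos_right A hB).trans hAB
  set Q : Fin B → (ZMod p)[X] := fun b => ∑ i : Fin A × Fin B,
    monomial ((i.1 : ℕ) + n * (i.2 : ℕ)) (l (i.1, b, i.2)) with hQ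
  have hinj : ∀ i j : Fin A × Fin B, (i.1 : ℕ) + n * (i.2 : ℕ) = (j.1 : ℕ) + n * (j.2 : ℕ) → i = j := by
    rintro ⟨a, c⟩ ⟨a', c'⟩ hij
    simp only at hij
    have ha : (a : ℕ) < n := a.2.trans_le hAn
    have ha' : (a' : ℕ) < n := a'.2.trans_le hAn
    have h1 : (a : ℕ) = a' := by
      have := congrArg (· % n) hij
      simpa [Nat.add_mul_mod_self_left, Nat.mod_eq_of_lt ha, Nat.mod_eq_of_lt ha'] using this
    have h2 : (c : ℕ) = c' := by
      rw [h1] at hij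
      exact Nat.eq_of_mul_eq_mul_left (by omega : 0 < n) (by omega)
    ext <;> assumption
  have hsum : ∑ b : Fin B, (1 - X) ^ (n * (b : ℕ)) * Q b = 0 := by
    rw [← h]
    rw [Fintype.sum_prod_type]
    simp_rw [Fintype.sum_prod_type, hQ, Fintype.sum_prod_type, Finset.mul_sum]
    rw [Finset.sum_comm]
    refine Finset.sum_congr rfl fun a _ => Finset.sum_congr rfl fun b _ => Finset.sum_congr rfl fun c _ => ?_
    rw [← C_mul_X_pow_eq_monomial, smul_eq_C_mul, pow_add]
    ring
  have hQ0 : ∀ m : ℕ, ∀ b : Fin B, (b : ℕ) = m → Q b = 0 := by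
    intro m
    induction m using Nat.strong_induction_on with
    | _ m ih =>
      intro b hb
      apply sparse_zero n
      · have hle : (Q b).natDegree ≤ (A - 1) + n * (B - 1) := by
          apply natDegree_sum_le_of_forall_le
          rintro ⟨a, c⟩ _
          refine (natDegree_monomial_le _).trans ?_
          have h1 := a.2
          have h2 := c.2
          simp only
          gcongr <;> omega
        rcases Nat.eq_zero_or_pos A with h0 | h0
        · have : Q b = 0 := by
            subst h0
            simp [hQ]
          rw [this]; simp; exact (Fact.out : p.Prime).pos
        · obtain ⟨B', rfl⟩ : ∃ B', B = B' + 1 := ⟨B - 1, by omega⟩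
          simp only [Nat.add_sub_cancel] at hle
          rw [Nat.mul_add] at hp
          omega
      · have hsub : (Q b).support ⊆ (univ : Finset (Fin A × Fin B)).image
            (fun i => (i.1 : ℕ) + n * (i.2 : ℕ)) := by
          intro k hk
          rw [mem_support_iff, hQ] at hk
          simp only [finsetSum_coeff, coeff_monomial] at hk
          obtain ⟨i, _, hi⟩ := Finset.exists_ne_zero_of_sum_ne_zero hk
          rw [Finset.mem_image]
          refine ⟨i, Finset.mem_univ _, ?_⟩
          by_contra hne
          simp [hne] at hi
        refine (Finset.card_le_card hsub).trans (Finset.card_image_le.trans ?_)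
        simpa using hAB
      · have hneg : (X - 1 : (ZMod p)[X]) = -(1 - X) := by ring
        have key : (1 - X : (ZMod p)[X]) ^ (n * (b : ℕ)) * (1 - X) ^ n ∣ (1 - X) ^ (n * (b : ℕ)) * Q b := by
          rw [← Finset.add_sum_erase _ _ (Finset.mem_univ b)] at hsum
          rw [eq_neg_of_add_eq_zero_left hsum]
          rw [dvd_neg]
          apply Finset.dvd_sum
          intro b' hb'
          have hne : b' ≠ b := (Finset.mem_erase.1 hb').1
          rcases lt_or_gt_of_ne (fun hh : (b' : ℕ) = b => hne (Fin.ext hh)) with hlt | hgt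
          · rw [ih b' (by omega) b' rfl]; simp
          · apply Dvd.dvd.mul_right
            rw [← pow_add]
            apply pow_dvd_pow
            calc n * (b : ℕ) + n = n * ((b : ℕ) + 1) := by ring
              _ ≤ n * b' := Nat.mul_le_mul_left _ hgt
        have h1X : (1 - X : (ZMod p)[X]) ≠ 0 := by
          intro h0
          have := congrArg (eval 0) h0
          simp at this
        rw [mul_dvd_mul_iff_left (pow_ne_zero _ h1X)] at key
        rw [hneg, neg_pow]
        exact (IsUnit.mul_left_dvd ((isUnit_one.neg).pow n)).2 key
  funext ⟨a, b, c⟩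
  have h1 := congrArg (fun P => P.coeff ((a : ℕ) + n * (c : ℕ))) (hQ0 b b rfl)
  simp only [hQ, finsetSum_coeff, coeff_monomial, coeff_zero] at h1
  rw [Finset.sum_eq_single (a, c)] at h1
  · simpa using h1
  · intro i _ hi
    rw [if_neg]
    intro hh
    exact hi (hinj i (a, c) hh)
  · simp

/-- solutions of `μ ^ n = α`, `(1-μ)^n = β`. -/
def Ns (n : ℕ) (k : ZMod p × ZMod p) : Finset (ZMod p) :=
  univ.filter (fun μ => μ ^ n = k.1 ∧ (1 - μ) ^ n = k.2)

theorem mem_Ns (n : ℕ) (k : ZMod p × ZMod p) (μ : ZMod p) :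
    μ ∈ Ns n k ↔ μ ^ n = k.1 ∧ (1 - μ) ^ n = k.2 := by simp [Ns]

theorem stepanov_core (n A B : ℕ) (hn : 0 < n) (hA : 0 < A) (hB : 0 < B) (hAB : A * B ≤ n) (hp : n * B ≤ p)
    (K : Finset (ZMod p × ZMod p)) (hK : ∀ k ∈ K, k.1 ≠ 0 ∧ k.2 ≠ 0)
    (hc : 2 * K.card * A < B ^ 2) : A * ∑ k ∈ K, (Ns n k).card ≤ 2 * n * B := by
  classical
  have hAn : A ≤ n := (Nat.le_mul_of_pos_right A hB).trans hAB
  have hnp : n ≤ p := (Nat.le_mul_of_pos_right n hB).trans hp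
  let I := Fin A × Fin B × Fin B
  let f : K × Fin A → I → (ZMod p)[X] := fun q i =>
    (q.1.1.1 ^ (i.2.2 : ℕ) * q.1.1.2 ^ (i.2.1 : ℕ)) • ((Top (n * (i.2.2 : ℕ)) (n * (i.2.1 : ℕ))) ^ (q.2 : ℕ)) (X ^ (i.1 : ℕ))
  let Φ : (I → ZMod p) →ₗ[ZMod p] ((K × Fin A) × Fin (2 * A) → ZMod p) :=
    LinearMap.pi fun q => (lcoeff (ZMod p) (q.2 : ℕ)) ∘ₗ
      (Fintype.linearCombination (ZMod p) (f q.1))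
  have hker : LinearMap.ker Φ ≠ ⊥ := by
    apply LinearMap.ker_ne_bot_of_finrank_lt
    simp only [Module.finrank_fintype_fun_eq_card, Fintype.card_prod, Fintype.card_fin, I, Fintype.card_coe]
    nlinarith
  obtain ⟨l, hl, hl0⟩ := (Submodule.ne_bot_iff _).1 hker
  have hf : ∀ q : K × Fin A, ∑ i, l i • f q i = 0 := by
    intro q
    ext m
    by_cases hm : m < 2 * A
    · have := congrFun (LinearMap.mem_ker.1 hl) (q, ⟨m, hm⟩)
      simpa [Φ, Fintype.linearCombination_apply] using this
    · rw [coeff_zero]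
      apply coeff_eq_zero_of_natDegree_lt
      refine lt_of_le_of_lt (b := 2 * A - 1) ?_ (by omega)
      apply natDegree_sum_le_of_forall_le
      intro i _
      refine (natDegree_smul_le _ _).trans ((natDegree_smul_le _ _).trans ?_)
      refine (Top_pow_deg _ _ _ (A - 1) _ ?_).trans ?_
      · rw [natDegree_X_pow]; have := i.1.2; omega
      · have := q.2.2; omega
  set Ψ : (ZMod p)[X] := ∑ i : I, l i • ((X : (ZMod p)[X]) ^ (i.1 : ℕ) *
      (X ^ (n * (i.2.2 : ℕ)) * (1 - X) ^ (n * (i.2.1 : ℕ)))) with hΨ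
  have hΨ0 : Ψ ≠ 0 := fun h0 => hl0 (psi_indep n A B hB hAB hp l h0)
  have hdeg : Ψ.natDegree ≤ 2 * n * B := by
    apply natDegree_sum_le_of_forall_le
    rintro ⟨a, b, c⟩ _
    refine (natDegree_smul_le _ _).trans ?_
    have h1 : ((X : (ZMod p)[X]) ^ (a : ℕ) *
      (X ^ (n * (c : ℕ)) * (1 - X) ^ (n * (b : ℕ)))).natDegree ≤ a + (n * c + n * b * 1) := by
      refine natDegree_mul_le.trans (add_le_add (by simp) (natDegree_mul_le.trans (add_le_add (by simp) ?_)))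
      refine natDegree_pow_le.trans (Nat.mul_le_mul_left _ (by compute_degree))
    refine h1.trans ?_
    have := a.2
    have hb : n * (b : ℕ) + n ≤ n * B := by
      calc n * (b : ℕ) + n = n * (b + 1) := by ring
        _ ≤ n * B := Nat.mul_le_mul_left _ b.2
    have hc : n * (c : ℕ) + n ≤ n * B := by
      calc n * (c : ℕ) + n = n * (c + 1) := by ring
        _ ≤ n * B := Nat.mul_le_mul_left _ c.2
    have h2 : 2 * n * B = n * B + n * B := by ring
    rw [h2, mul_one]
    omega
  have hmul : ∀ k ∈ K, ∀ x ∈ Ns n k, A ≤ Ψ.rootMultiplicity x := by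
    intro k hk x hx
    rw [mem_Ns] at hx
    obtain ⟨hk1, hk2⟩ := hK k hk
    rw [le_rootMultiplicity_iff hΨ0]
    apply mult_lemma x _ _ A (hAn.trans hnp)
    · intro j hj
      have := congrArg (eval x) (hf (⟨k, hk⟩, ⟨j, hj⟩))
      rw [hΨ, map_sum, eval_finsetSum]
      rw [eval_finsetSum, eval_zero] at this
      rw [← this]
      refine Finset.sum_congr rfl fun i _ => ?_
      rw [map_smul, th_pow_Top]
      simp only [f, eval_smul, eval_mul, eval_pow, eval_X, eval_sub, eval_one, smul_eq_mul]
      rw [pow_mul, pow_mul, hx.1, hx.2]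
      ring
    · rintro rfl
      apply hk1
      rw [← hx.1, zero_pow hn.ne']
    · intro h0
      apply hk2
      rw [← hx.2, h0, zero_pow hn.ne']
  have hdisj : (K : Set (ZMod p × ZMod p)).PairwiseDisjoint (Ns n) := by
    intro k _ k' _ hkk
    rw [Function.onFun, Finset.disjoint_left]
    intro x hx hx'
    rw [mem_Ns] at hx hx'
    apply hkk
    ext
    · rw [← hx.1, hx'.1]
    · rw [← hx.2, hx'.2]
  rw [← Finset.card_biUnion hdisj]
  calc A * (K.biUnion (Ns n)).card = ∑ x ∈ K.biUnion (Ns n), A := by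
        rw [Finset.sum_const, smul_eq_mul, mul_comm]
    _ ≤ ∑ x ∈ K.biUnion (Ns n), Ψ.rootMultiplicity x := by
        apply Finset.sum_le_sum
        intro x hx
        rw [Finset.mem_biUnion] at hx
        obtain ⟨k, hk, hx⟩ := hx
        exact hmul k hk x hx
    _ = ∑ x ∈ K.biUnion (Ns n), Ψ.roots.count x := by simp_rw [count_roots]
    _ ≤ Multiset.card Ψ.roots := by
        rw [← Multiset.toFinset_sum_count_eq]
        refine Finset.sum_le_sum_of_ne_zero ?_
        intro x _ hx
        rw [Multiset.mem_toFinset]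
        exact Multiset.count_ne_zero.1 hx
    _ ≤ Ψ.natDegree := card_roots' _
    _ ≤ _ := hdeg

theorem stepanov (n : ℕ) (hn : 0 < n)
    (K : Finset (ZMod p × ZMod p)) (hK : ∀ k ∈ K, k.1 ≠ 0 ∧ k.2 ≠ 0)
    (h1 : 16 * K.card ≤ n ^ 2) (h2 : 16 * K.card * n ^ 4 ≤ p ^ 3) :
    (∑ k ∈ K, (Ns n k).card) ^ 3 ≤ 16384 * (K.card * n) ^ 2 := by
  rcases Nat.eq_zero_or_pos K.card with h0 | h0
  · rw [Finset.card_eq_zero] at h0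
    subst h0; simp
  have hex : ∃ B, 2 * K.card * n < B ^ 3 := ⟨2 * K.card * n + 1, by
    calc 2 * K.card * n < 2 * K.card * n + 1 := Nat.lt_succ_self _
      _ ≤ (2 * K.card * n + 1) ^ 3 := Nat.le_self_pow (by norm_num) _⟩
  classical
  obtain ⟨B, hB, hmin⟩ : ∃ B, 2 * K.card * n < B ^ 3 ∧ ∀ m < B, m ^ 3 ≤ 2 * K.card * n :=
    ⟨Nat.find hex, Nat.find_spec hex, fun m hm => not_lt.1 (Nat.find_min hex hm)⟩
  have hKn : 1 ≤ K.card * n := Nat.mul_pos h0 hn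
  have hB2 : 2 ≤ B := by
    by_contra hlt
    have : B ^ 3 ≤ 1 ^ 3 := Nat.pow_le_pow_left (by omega) 3
    rw [mul_assoc] at hB
    omega
  obtain ⟨b, rfl⟩ : ∃ b, B = b + 1 := ⟨B - 1, by omega⟩
  have hb := hmin b (Nat.lt_succ_self b)
  have hB16 : (b + 1) ^ 3 ≤ 16 * (K.card * n) := by
    calc (b + 1) ^ 3 ≤ (2 * b) ^ 3 := Nat.pow_le_pow_left (by omega) 3
      _ = 8 * b ^ 3 := by ring
      _ ≤ 8 * (2 * K.card * n) := Nat.mul_le_mul_left _ hb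
      _ = _ := by ring
  have hBn : b + 1 ≤ n := by
    have : (b + 1) ^ 3 ≤ n ^ 3 := by
      calc (b + 1) ^ 3 ≤ 16 * (K.card * n) := hB16
        _ = 16 * K.card * n := by ring
        _ ≤ n ^ 2 * n := Nat.mul_le_mul_right _ h1
        _ = _ := by ring
    exact le_of_pow_le_pow_left₀ (by norm_num) (by omega) this
  have hnB : n * (b + 1) ≤ p := by
    have : (n * (b + 1)) ^ 3 ≤ p ^ 3 := by
      calc (n * (b + 1)) ^ 3 = n ^ 3 * (b + 1) ^ 3 := by ring
        _ ≤ n ^ 3 * (16 * (K.card * n)) := Nat.mul_le_mul_left _ hB16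
        _ = 16 * K.card * n ^ 4 := by ring
        _ ≤ _ := h2
    exact le_of_pow_le_pow_left₀ (by norm_num) (by omega) this
  set A := n / (b + 1) with hA
  have hA1 : 1 ≤ A := (Nat.one_le_div_iff (by omega)).2 hBn
  have hAB : A * (b + 1) ≤ n := Nat.div_mul_le_self _ _
  have hA2 : n ≤ 2 * (A * (b + 1)) := by
    have h3 : n < (A + 1) * (b + 1) := by
      have h4 := Nat.div_add_mod n (b + 1)
      have h5 := Nat.mod_lt n (show b + 1 > 0 by omega)
      rw [← hA] at h4
      nlinarith
    nlinarith
  have hcond : 2 * K.card * A < (b + 1) ^ 2 := by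
    have : 2 * K.card * A * (b + 1) < (b + 1) ^ 2 * (b + 1) := by
      calc 2 * K.card * A * (b + 1) = 2 * K.card * (A * (b + 1)) := by ring
        _ ≤ 2 * K.card * n := Nat.mul_le_mul_left _ hAB
        _ < (b + 1) ^ 3 := hB
        _ = _ := by ring
    exact lt_of_mul_lt_mul_right this (by omega)
  have main := stepanov_core n A (b + 1) hn hA1 (by omega) hAB hnB K hK hcond
  set Z := ∑ k ∈ K, (Ns n k).card
  have hZ : Z ≤ 4 * (b + 1) ^ 2 := by
    have : n * Z ≤ n * (4 * (b + 1) ^ 2) := by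
      calc n * Z ≤ 2 * (A * (b + 1)) * Z := Nat.mul_le_mul_right _ hA2
        _ = 2 * (b + 1) * (A * Z) := by ring
        _ ≤ 2 * (b + 1) * (2 * n * (b + 1)) := Nat.mul_le_mul_left _ main
        _ = _ := by ring
    exact Nat.le_of_mul_le_mul_left this hn
  calc Z ^ 3 ≤ (4 * (b + 1) ^ 2) ^ 3 := Nat.pow_le_pow_left hZ 3
    _ = 64 * ((b + 1) ^ 3) ^ 2 := by ring
    _ ≤ 64 * (16 * (K.card * n)) ^ 2 := Nat.mul_le_mul_left _ (Nat.pow_le_pow_left hB16 2)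
    _ = _ := by ring

end Stmt6

namespace Stmt6

theorem layer_cube {α : Type*} (S : Finset α) (f : α → ℕ) (n : ℕ) (B : ℝ)
    (hf : ∀ x ∈ S, f x ≤ n)
    (hB : ∀ m : ℕ, 1 ≤ m → ((S.filter (fun x => m ≤ f x)).card : ℝ) * (m:ℝ)^3 ≤ B) :
    ∑ x ∈ S, (f x : ℝ)^3 ≤ 3 * B * (1 + Real.log n) := by
  have hcube : ∀ k : ℕ, (k:ℝ)^3 ≤ ∑ m ∈ Icc 1 k, 3 * (m:ℝ)^2 := by
    intro k
    induction k with
    | zero => simp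
    | succ k ih =>
      rw [Finset.sum_Icc_succ_top (by omega)]
      push_cast
      nlinarith [(Nat.cast_nonneg k : (0:ℝ) ≤ k)]
  have h1 : ∑ x ∈ S, (f x : ℝ)^3 ≤ ∑ x ∈ S, ∑ m ∈ Icc 1 n, if m ≤ f x then 3 * (m:ℝ)^2 else 0 := by
    apply Finset.sum_le_sum
    intro x hx
    refine (hcube _).trans (le_of_eq ?_)
    rw [← Finset.sum_filter]
    apply Finset.sum_congr _ (fun _ _ => rfl)
    ext m
    have := hf x hx
    simp only [mem_Icc, mem_filter]
    omega
  refine h1.trans ?_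
  rw [Finset.sum_comm]
  have h2 : ∀ m ∈ Icc 1 n, (∑ x ∈ S, if m ≤ f x then 3 * (m:ℝ)^2 else 0) ≤ 3 * B * (m:ℝ)⁻¹ := by
    intro m hm
    rw [mem_Icc] at hm
    rw [← Finset.sum_filter, Finset.sum_const, nsmul_eq_mul]
    have hm0 : (0:ℝ) < m := by exact_mod_cast hm.1
    have := hB m hm.1
    rw [← div_eq_mul_inv, le_div_iff₀ hm0]
    nlinarith
  refine (Finset.sum_le_sum h2).trans ?_
  rw [← Finset.mul_sum]
  have hB0 : 0 ≤ B := le_trans (by positivity) (hB 1 le_rfl)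
  apply mul_le_mul_of_nonneg_left _ (by positivity)
  have := harmonic_le_one_add_log n
  rw [harmonic_eq_sum_Icc] at this
  push_cast at this
  exact this

theorem layer_sq {α : Type*} (S : Finset α) (f : α → ℕ) (n : ℕ) (B : ℝ) (M : ℕ) (hM : 1 ≤ M)
    (hf : ∀ x ∈ S, f x ≤ n)
    (hB : ∀ m : ℕ, 1 ≤ m → ((S.filter (fun x => m ≤ f x)).card : ℝ) * (m:ℝ)^3 ≤ B) :
    ∑ x ∈ S.filter (fun x => M < f x), (f x : ℝ)^2 ≤ 4 * B / M := by
  have hB0 : 0 ≤ B := le_trans (by positivity) (hB 1 le_rfl)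
  have hM0 : (1:ℝ) ≤ M := by exact_mod_cast hM
  have hsq : ∀ k : ℕ, M ≤ k → (k:ℝ)^2 = (M:ℝ)^2 + ∑ m ∈ Ioc M k, (2 * (m:ℝ) - 1) := by
    intro k hk
    induction k, hk using Nat.le_induction with
    | base => simp
    | succ k hk ih =>
      rw [Finset.sum_Ioc_succ_top hk, ← add_assoc, ← ih]
      push_cast
      ring
  have hser : ∀ k : ℕ, M ≤ k → ∑ m ∈ Ioc M k, (2:ℝ) * ((m:ℝ)^2)⁻¹ ≤ 2 / M - 2 / k := by
    intro k hk
    induction k, hk using Nat.le_induction with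
    | base => simp
    | succ k hk ih =>
      rw [Finset.sum_Ioc_succ_top hk]
      have hk0 : (0:ℝ) < k := by exact_mod_cast (by omega : 0 < k)
      have : (2:ℝ) * (((k+1:ℕ):ℝ)^2)⁻¹ ≤ 2 / k - 2 / ((k+1:ℕ):ℝ) := by
        push_cast
        rw [div_sub_div _ _ (by positivity) (by positivity), ← div_eq_mul_inv, div_le_div_iff₀ (by positivity) (by positivity)]
        nlinarith
      linarith
  have h1 : ∑ x ∈ S.filter (fun x => M < f x), (f x : ℝ)^2 ≤
      ∑ x ∈ S.filter (fun x => M < f x), ((M:ℝ)^2 + ∑ m ∈ Ioc M (max M n), if m ≤ f x then 2 * (m:ℝ) else 0) := by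
    apply Finset.sum_le_sum
    intro x hx
    rw [mem_filter] at hx
    rw [hsq _ hx.2.le]
    rw [← Finset.sum_filter]
    have : (Ioc M (max M n)).filter (fun m => m ≤ f x) = Ioc M (f x) := by
      ext m
      have := hf x hx.1
      simp only [mem_Ioc, mem_filter]
      omega
    rw [this]
    gcongr
    linarith
  refine h1.trans ?_
  rw [Finset.sum_add_distrib, Finset.sum_comm, Finset.sum_const, nsmul_eq_mul]
  have h2 : ((S.filter (fun x => M < f x)).card : ℝ) * (M:ℝ)^2 ≤ B / M := by
    rw [le_div_iff₀ (by linarith)]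
    refine le_trans ?_ (hB M hM)
    have : ((S.filter (fun x => M < f x)).card : ℝ) ≤ ((S.filter (fun x => M ≤ f x)).card : ℝ) := by
      exact_mod_cast Finset.card_le_card (fun x hx => by
        rw [mem_filter] at *
        exact ⟨hx.1, hx.2.le⟩)
    rw [mul_assoc, ← pow_succ]
    gcongr
  have h3 : ∀ m ∈ Ioc M (max M n), (∑ x ∈ S.filter (fun x => M < f x), if m ≤ f x then 2 * (m:ℝ) else 0) ≤ B * (2 * ((m:ℝ)^2)⁻¹) := by
    intro m hm
    rw [mem_Ioc] at hm
    rw [← Finset.sum_filter, Finset.sum_const, nsmul_eq_mul]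
    have hm0 : (0:ℝ) < m := by exact_mod_cast (by omega : 0 < m)
    have h5 := hB m (by omega)
    have : (((S.filter (fun x => M < f x)).filter (fun x => m ≤ f x)).card : ℝ) ≤ ((S.filter (fun x => m ≤ f x)).card : ℝ) := by
      exact_mod_cast Finset.card_le_card (fun x hx => by
        simp only [mem_filter] at *
        exact ⟨hx.1.1, hx.2⟩)
    rw [show B * (2 * ((m:ℝ)^2)⁻¹) = (2 * B) / (m:ℝ)^2 by ring, le_div_iff₀ (by positivity)]
    calc _ ≤ ((S.filter (fun x => m ≤ f x)).card : ℝ) * (2 * m) * m^2 := by gcongr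
      _ = 2 * (((S.filter (fun x => m ≤ f x)).card : ℝ) * m^3) := by ring
      _ ≤ _ := by linarith
  have h4 := Finset.sum_le_sum h3
  rw [← Finset.mul_sum] at h4
  have h5 := hser (max M n) (le_max_left _ _)
  have h6 : (0:ℝ) ≤ 2 / ((max M n : ℕ):ℝ) := by positivity
  have h7 : B * ∑ m ∈ Ioc M (max M n), (2:ℝ) * ((m:ℝ)^2)⁻¹ ≤ B * (2 / M) :=
    mul_le_mul_of_nonneg_left (by linarith) hB0
  have h8 : 4 * B / M = B / M + B * (2/M) + B / M := by ring
  have h9 : 0 ≤ B / M := by positivity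
  linarith

theorem sum_third (a : ℕ → ℝ) (G : ℝ) (hG : 0 ≤ G) (ha : ∀ k, 1 ≤ k → (a k)^3 * k ≤ G)
    (M : ℕ) (ha0 : ∀ k, 0 ≤ a k) : (∑ k ∈ Icc 1 M, a k)^3 ≤ 4 * G * (M:ℝ)^2 := by
  set g := G ^ ((1:ℝ)/3) with hg
  have hg0 : 0 ≤ g := by positivity
  have hg3 : g^3 = G := by
    rw [hg, ← Real.rpow_natCast, ← Real.rpow_mul hG]; norm_num
  set w : ℕ → ℝ := fun k => (k:ℝ) ^ ((1:ℝ)/3) with hw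
  have hw0 : ∀ k, 0 ≤ w k := fun k => by positivity
  have hw3 : ∀ k, (w k)^3 = k := fun k => by
    rw [hw]; simp only; rw [← Real.rpow_natCast, ← Real.rpow_mul (Nat.cast_nonneg k)]; norm_num
  have h1 : ∀ k, 1 ≤ k → a k * w k ≤ g := by
    intro k hk
    have : (a k * w k)^3 ≤ g^3 := by
      rw [mul_pow, hw3, hg3]; exact ha k hk
    exact le_of_pow_le_pow_left₀ (by norm_num) hg0 this
  have h2 : ∀ k : ℕ, ∑ i ∈ Icc 1 k, a i ≤ 3/2 * g * (w k)^2 := by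
    intro k
    induction k with
    | zero => simp; positivity
    | succ k ih =>
      rw [Finset.sum_Icc_succ_top (by omega)]
      have hu := hw0 k
      have hv := hw0 (k+1)
      have h3 := hw3 k
      have h4 := hw3 (k+1)
      have h5 := h1 (k+1) (by omega)
      set u := w k
      set v := w (k+1)
      push_cast at h4
      have hvpos : 0 < v := by
        rcases hv.lt_or_eq with h | h
        · exact h
        · rw [← h] at h4; have : (0:ℝ) ≤ k := Nat.cast_nonneg k
          norm_num at h4; linarith
      have h6 : 3/2 * (v^2 - u^2) * v ≥ 1 := by
        have : 0 ≤ (v-u)^2 * (v + 2*u) := by positivity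
        nlinarith
      have h7 : a (k+1) ≤ g * (3/2 * (v^2-u^2)) := by
        refine le_of_mul_le_mul_right ?_ hvpos
        calc _ ≤ g * 1 := by linarith
          _ ≤ g * (3/2 * (v^2 - u^2) * v) := by gcongr
          _ = _ := by ring
      linarith
  have h3 : 0 ≤ ∑ k ∈ Icc 1 M, a k := Finset.sum_nonneg (fun k _ => ha0 k)
  calc _ ≤ (3/2 * g * (w M)^2)^3 := by gcongr; exact h2 M
    _ = 27/8 * g^3 * ((w M)^3)^2 := by ring
    _ = 27/8 * G * (M:ℝ)^2 := by rw [hg3, hw3]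
    _ ≤ _ := by gcongr; norm_num

end Stmt6

namespace Stmt6
variable {p : ℕ} [Fact p.Prime]

/-- Richness threshold. -/
def Th (p n : ℕ) : ℕ := 81 * (1 + n^2 / p)

/-- `k` is a rich class. -/
def Rich (n : ℕ) (k : ZMod p × ZMod p) : Prop :=
  k.1 ≠ 0 ∧ k.2 ≠ 0 ∧ Th p n < (Ns n k).card

theorem rich_lemma (n : ℕ) (hn : 4 ≤ n) (hp : 16 * n^4 ≤ p^3) (K : Finset (ZMod p × ZMod p))
    (hK : ∀ k ∈ K, Rich n k) :
    (∑ k ∈ K, (Ns n k).card)^3 ≤ 16384 * (K.card * n)^2 := by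
  set L := min (n^2/16) (p^3/(16*n^4)) with hL
  have hn4 : 0 < 16 * n^4 := by positivity
  have hL1 : 16 * L ≤ n^2 := by
    have : L ≤ n^2/16 := min_le_left _ _
    omega
  have hL2 : 16 * L * n^4 ≤ p^3 := by
    have h1 : L ≤ p^3/(16*n^4) := min_le_right _ _
    have h2 := Nat.mul_le_of_le_div _ _ _ h1
    linarith
  by_cases hc : K.card ≤ L
  · apply stepanov n (by omega) K (fun k hk => ⟨(hK k hk).1, (hK k hk).2.1⟩)
    · omega
    · refine le_trans ?_ hL2
      gcongr
  · exfalso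
    obtain ⟨K', hK', hcard⟩ := Finset.exists_subset_card_eq (not_le.1 hc).le
    have h1 := stepanov n (by omega) K' (fun k hk => ⟨(hK k (hK' hk)).1, (hK k (hK' hk)).2.1⟩)
      (by rw [hcard]; exact hL1) (by rw [hcard]; exact hL2)
    rw [hcard] at h1
    have hp0 : 0 < p := (Fact.out : p.Prime).pos
    set κ := 1 + n^2/p with hκ
    have hκp : n^2 ≤ κ * p := by
      have := Nat.lt_div_mul_add (a := n^2) hp0
      rw [hκ, add_mul, one_mul]; omega
    have h2 : L * Th p n ≤ ∑ k ∈ K', (Ns n k).card := by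
      rw [← hcard, ← smul_eq_mul]
      exact Finset.card_nsmul_le_sum _ _ _ (fun k hk => (hK k (hK' hk)).2.2.le)
    have hL0 : 0 < L := by
      rw [hL, lt_min_iff]
      constructor
      · have : 16 ≤ n^2 := by nlinarith
        omega
      · exact Nat.div_pos hp hn4
    have h2' : L * Th p n + L ≤ ∑ k ∈ K', (Ns n k).card := by
      have : L * (Th p n + 1) ≤ ∑ k ∈ K', (Ns n k).card := by
        rw [← hcard, ← smul_eq_mul]
        exact Finset.card_nsmul_le_sum _ _ _ (fun k hk => (hK k (hK' hk)).2.2)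
      linarith
    have h3 : (L * Th p n)^3 < 16384 * (L*n)^2 := by
      refine lt_of_lt_of_le ?_ h1
      apply Nat.pow_lt_pow_left _ (by norm_num)
      omega
    have h4 : L * (Th p n)^3 < 16384 * n^2 := by
      have : (L^2) * (L * (Th p n)^3) < L^2 * (16384 * n^2) := by nlinarith
      exact lt_of_mul_lt_mul_left this (by positivity)
    have h5 : n^2 ≤ 32 * (κ^3 * L) := by
      rcases min_cases (n^2/16) (p^3/(16*n^4)) with ⟨h, -⟩ | ⟨h, -⟩
      · rw [← hL] at h
        have : n^2 ≤ 32 * L := by omega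
        have hk1 : 1 ≤ κ^3 := Nat.one_le_pow _ _ (Nat.le_add_right 1 _)
        nlinarith
      · rw [← hL] at h
        have h6 : p^3 ≤ 32 * n^4 * L := by
          have := Nat.lt_div_mul_add (a := p^3) hn4
          rw [← h] at this
          nlinarith
        have h7 : (n^2)^3 ≤ (κ * p)^3 := Nat.pow_le_pow_left hκp 3
        have h8 : n^4 * n^2 ≤ n^4 * (32 * (κ^3 * L)) := by
          calc n^4 * n^2 = (n^2)^3 := by ring
            _ ≤ κ^3 * p^3 := by rw [← mul_pow]; exact h7
            _ ≤ κ^3 * (32 * n^4 * L) := by gcongr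
            _ = _ := by ring
        exact le_of_mul_le_mul_left h8 (by positivity)
    have h6 : Th p n = 81 * κ := rfl
    rw [h6] at h4
    have : (81 * κ)^3 = 531441 * κ^3 := by ring
    rw [this] at h4
    have h9 : 0 ≤ κ^3 * L := by positivity
    nlinarith

open Classical in
/-- finset of rich classes -/
noncomputable def RS (p : ℕ) [Fact p.Prime] (n : ℕ) : Finset (ZMod p × ZMod p) := univ.filter (Rich n)

theorem mem_RS (n : ℕ) (k : ZMod p × ZMod p) : k ∈ RS p n ↔ Rich n k := by
  classical
  simp [RS]

theorem Ns_card_le (n : ℕ) (hn : 0 < n) (k : ZMod p × ZMod p) : (Ns n k).card ≤ n := by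
  have : Ns n k ⊆ (Polynomial.nthRoots n k.1).toFinset := by
    intro μ hμ
    rw [mem_Ns] at hμ
    rw [Multiset.mem_toFinset, Polynomial.mem_nthRoots hn]
    exact hμ.1
  exact (Finset.card_le_card this).trans ((Multiset.toFinset_card_le _).trans (Polynomial.card_nthRoots n k.1))

theorem card_pow_eq_le (n : ℕ) (hn : 0 < n) (y : ZMod p) : (univ.filter (fun x : ZMod p => x^n = y)).card ≤ n := by
  have : univ.filter (fun x : ZMod p => x^n = y) ⊆ (Polynomial.nthRoots n y).toFinset := by
    intro μ hμ
    rw [mem_filter] at hμ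
    rw [Multiset.mem_toFinset, Polynomial.mem_nthRoots hn]
    exact hμ.2
  exact (Finset.card_le_card this).trans ((Multiset.toFinset_card_le _).trans (Polynomial.card_nthRoots n y))

theorem rich_count (n : ℕ) (hn : 4 ≤ n) (hp : 16 * n^4 ≤ p^3) (m : ℕ) (hm : 1 ≤ m) (K : Finset (ZMod p × ZMod p))
    (hK : ∀ k ∈ K, Rich n k ∧ m ≤ (Ns n k).card) : K.card * m^3 ≤ 16384 * n^2 := by
  have h1 := rich_lemma n hn hp K (fun k hk => (hK k hk).1)
  have h2 : K.card * m ≤ ∑ k ∈ K, (Ns n k).card := by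
    rw [← smul_eq_mul]
    exact Finset.card_nsmul_le_sum _ _ _ (fun k hk => (hK k hk).2)
  rcases Nat.eq_zero_or_pos K.card with h | h
  · rw [h]; simp
  have h3 : (K.card * m)^3 ≤ 16384 * (K.card * n)^2 := (Nat.pow_le_pow_left h2 3).trans h1
  have h4 : K.card^2 * (K.card * m^3) ≤ K.card^2 * (16384 * n^2) := by nlinarith
  exact le_of_mul_le_mul_left h4 (by positivity)

theorem rich_cube (n : ℕ) (hn : 4 ≤ n) (hp : 16 * n^4 ≤ p^3) :
    ∑ k ∈ RS p n, ((Ns n k).card : ℝ)^3 ≤ 3 * (16384 * n^2) * (1 + Real.log n) := by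
  apply layer_cube
  · intro k hk
    exact Ns_card_le n (by omega) k
  · intro m hm
    have := rich_count (p := p) n hn hp m hm ((RS p n).filter (fun k => m ≤ (Ns n k).card)) (fun k hk => by
      rw [mem_filter, mem_RS] at hk; exact hk)
    exact_mod_cast this

end Stmt6

namespace Stmt6
variable {p : ℕ} [Fact p.Prime]

/-- number of representations as a difference -/
def rr (A : Finset (ZMod p)) (x : ZMod p) : ℕ := (A.filter (fun v => x + v ∈ A)).card

/-- additive energy -/
def EE (A : Finset (ZMod p)) : ℕ := ∑ x, (rr A x)^2

/-- classes of nonzero sums -/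
def YY (A : Finset (ZMod p)) : Finset (ZMod p) := ((A + A).erase 0).image (fun z => z ^ A.card)

variable {A : Finset (ZMod p)}

theorem ne_zero_of_mem (hA : mulSubgroup p A) {a : ZMod p} (ha : a ∈ A) : a ≠ 0 :=
  fun h => hA.1 (h ▸ ha)

theorem mul_mem_iff (hA : mulSubgroup p A) {a : ZMod p} (ha : a ∈ A) (x : ZMod p) : a * x ∈ A ↔ x ∈ A := by
  constructor
  · intro h
    have := hA.2.2.1 _ (hA.2.2.2 a ha) _ h
    rwa [← mul_assoc, inv_mul_cancel₀ (ne_zero_of_mem hA ha), one_mul] at this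
  · exact fun h => hA.2.2.1 _ ha _ h

theorem card_pos (hA : mulSubgroup p A) : 0 < A.card := Finset.card_pos.2 ⟨1, hA.2.1⟩

theorem sum_mul_left {M : Type*} [AddCommMonoid M] (hA : mulSubgroup p A) {a : ZMod p} (ha : a ∈ A)
    (g : ZMod p → M) : ∑ x ∈ A, g (a * x) = ∑ x ∈ A, g x := by
  have h0 := ne_zero_of_mem hA ha
  apply Finset.sum_bij (fun x _ => a * x)
  · intro x hx; exact (mul_mem_iff hA ha x).2 hx
  · intro x _ y _ h; exact mul_left_cancel₀ h0 h
  · intro y hy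
    refine ⟨a⁻¹ * y, hA.2.2.1 _ (hA.2.2.2 a ha) _ hy, ?_⟩
    rw [← mul_assoc, mul_inv_cancel₀ h0, one_mul]
  · intros; rfl

theorem pow_card (hA : mulSubgroup p A) {a : ZMod p} (ha : a ∈ A) : a ^ A.card = 1 := by
  have h0 := ne_zero_of_mem hA ha
  have h : ∏ x ∈ A, (a * x) = ∏ x ∈ A, x := by
    apply Finset.prod_bij (fun x _ => a * x)
    · intro x hx; exact (mul_mem_iff hA ha x).2 hx
    · intro x _ y _ h; exact mul_left_cancel₀ h0 h
    · intro y hy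
      refine ⟨a⁻¹ * y, hA.2.2.1 _ (hA.2.2.2 a ha) _ hy, ?_⟩
      rw [← mul_assoc, mul_inv_cancel₀ h0, one_mul]
    · intros; rfl
  rw [Finset.prod_mul_distrib, Finset.prod_const] at h
  have h1 : ∏ x ∈ A, x ≠ 0 := Finset.prod_ne_zero_iff.2 (fun x hx => ne_zero_of_mem hA hx)
  exact mul_right_cancel₀ h1 (by rw [h, one_mul])

theorem orbit (hA : mulSubgroup p A) (S : Finset (ZMod p)) (hS0 : ∀ x ∈ S, x ≠ 0)
    (hS : ∀ a ∈ A, ∀ x ∈ S, a * x ∈ S) :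
    A.card * (S.image (fun z => z ^ A.card)).card ≤ S.card := by
  apply Finset.mul_card_image_le_card
  intro y hy
  obtain ⟨x, hx, rfl⟩ := Finset.mem_image.1 hy
  refine (Finset.card_image_of_injective A (mul_left_injective₀ (hS0 x hx))).symm.le.trans (Finset.card_le_card ?_)
  intro z hz
  obtain ⟨a, ha, rfl⟩ := Finset.mem_image.1 hz
  rw [mem_filter]
  refine ⟨hS a ha x hx, ?_⟩
  rw [mul_pow, pow_card hA ha, one_mul]

theorem rr_mul (hA : mulSubgroup p A) {a : ZMod p} (ha : a ∈ A) (x : ZMod p) : rr A (a * x) = rr A x := by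
  have h0 := ne_zero_of_mem hA ha
  unfold rr
  symm
  apply Finset.card_bij (fun v _ => a * v)
  · intro v hv
    rw [mem_filter] at *
    rw [← mul_add, mul_mem_iff hA ha, mul_mem_iff hA ha]
    exact hv
  · intro x _ y _ h; exact mul_left_cancel₀ h0 h
  · intro y hy
    rw [mem_filter] at hy
    refine ⟨a⁻¹ * y, ?_, ?_⟩
    · have h1 : a⁻¹ ∈ A := hA.2.2.2 a ha
      rw [mem_filter]
      rw [mul_mem_iff hA h1]
      refine ⟨hy.1, ?_⟩
      rw [← mul_mem_iff hA ha, mul_add, ← mul_assoc a a⁻¹, mul_inv_cancel₀ h0, one_mul]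
      exact hy.2
    · rw [← mul_assoc, mul_inv_cancel₀ h0, one_mul]

theorem rr_zero : rr A 0 = A.card := by
  unfold rr
  rw [Finset.filter_true_of_mem]
  intro v hv; rwa [zero_add]

theorem rr_le_card (x : ZMod p) : rr A x ≤ A.card := Finset.card_filter_le _ _

theorem rr_le_N (hA : mulSubgroup p A) {x : ZMod p} (hx : x ≠ 0) :
    rr A x ≤ (Ns A.card ((x^A.card)⁻¹, ((-x)^A.card)⁻¹)).card := by
  unfold rr
  apply Finset.card_le_card_of_injOn (fun v => (x + v) * x⁻¹)
  · intro v hv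
    rw [mem_coe, mem_filter] at hv
    rw [mem_coe, mem_Ns]
    simp only
    constructor
    · rw [mul_pow, pow_card hA hv.2, one_mul, inv_pow]
    · have : 1 - (x+v) * x⁻¹ = v * (-x)⁻¹ := by
        rw [add_mul, mul_inv_cancel₀ hx, inv_neg]; ring
      rw [this, mul_pow, pow_card hA hv.1, one_mul, inv_pow]
  · intro v _ w _ h
    have := mul_right_cancel₀ (inv_ne_zero hx) h
    exact add_left_cancel this

theorem sum_pairs (g : ZMod p → ℝ) : ∑ b ∈ A, ∑ c ∈ A, g (b - c) = ∑ x, (rr A x : ℝ) * g x := by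
  have h1 : ∀ x, (rr A x : ℝ) * g x = ∑ c ∈ A, if x + c ∈ A then g x else 0 := by
    intro x
    rw [← Finset.sum_filter, Finset.sum_const, nsmul_eq_mul]; rfl
  simp_rw [h1]
  rw [Finset.sum_comm, Finset.sum_comm (s := univ)]
  apply Finset.sum_congr rfl
  intro c _
  rw [← Finset.sum_filter]
  apply Finset.sum_bij (fun b _ => b - c)
  · intro b hb; simp [hb]
  · intro b _ b' _ h; exact sub_left_injective h
  · intro x hx
    rw [mem_filter] at hx
    exact ⟨x + c, hx.2, by ring⟩
  · intros; rfl

theorem sum_rr : ∑ x, (rr A x : ℝ) = (A.card : ℝ)^2 := by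
  have := sum_pairs (A := A) (fun _ => 1)
  simp only [mul_one] at this
  rw [← this]
  simp [pow_two]

theorem EE_cast : (EE A : ℝ) = ∑ x, (rr A x : ℝ)^2 := by
  unfold EE; push_cast; rfl

theorem sum_pairs_rr : ∑ b ∈ A, ∑ c ∈ A, (rr A (b - c) : ℝ) = EE A := by
  rw [sum_pairs (fun x => (rr A x : ℝ)), EE_cast]
  apply Finset.sum_congr rfl; intros; ring

theorem sum_one (hA : mulSubgroup p A) {b : ZMod p} (hb : b ∈ A) :
    (A.card : ℝ) * ∑ c ∈ A, (rr A (b - c) : ℝ) = EE A := by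
  rw [← sum_pairs_rr (A := A), ← nsmul_eq_mul, ← Finset.sum_const]
  apply Finset.sum_congr rfl
  intro b' hb'
  rw [← sum_mul_left hA (hA.2.2.1 _ hb' _ (hA.2.2.2 _ hb)) (fun c => (rr A (b' - c) : ℝ))]
  apply Finset.sum_congr rfl
  intro c _
  rw [← rr_mul hA (hA.2.2.1 _ hb' _ (hA.2.2.2 _ hb)) (b - c)]
  congr 2
  have := ne_zero_of_mem hA hb
  field_simp

theorem rr_neg (x : ZMod p) : rr A (-x) = rr A x := by
  unfold rr
  apply Finset.card_bij (fun v _ => -x + v)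
  · intro v hv
    rw [mem_filter] at *
    exact ⟨hv.2, by simpa using hv.1⟩
  · intro x _ y _ h; exact add_left_cancel h
  · intro y hy
    rw [mem_filter] at hy
    exact ⟨x + y, by rw [mem_filter]; exact ⟨hy.2, by simpa using hy.1⟩, by ring⟩

theorem sum_one' (hA : mulSubgroup p A) {b : ZMod p} (hb : b ∈ A) :
    (A.card : ℝ) * ∑ c ∈ A, (rr A (c - b) : ℝ) = EE A := by
  rw [← sum_one hA hb]
  congr 1
  apply Finset.sum_congr rfl
  intro c _
  rw [← rr_neg, neg_sub]

theorem cs_energy : (A.card : ℝ)^4 ≤ (A + A).card * EE A := by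
  have h1 : (A.card)^2 * (A.card)^2 ≤ (A + A).card * Finset.addEnergy A A := Finset.le_card_add_mul_addEnergy A A
  have h2 : Finset.addEnergy A A = EE A := by
    have : (Finset.addEnergy A A : ℝ) = EE A := by
      rw [← sum_pairs_rr, Finset.addEnergy]
      rw [Finset.card_filter, Finset.sum_product, Finset.sum_product]
      push_cast
      apply Finset.sum_congr rfl
      intro b _
      apply Finset.sum_congr rfl
      intro c _
      rw [Finset.sum_product, rr, Finset.card_filter]
      push_cast
      apply Finset.sum_congr rfl
      intro v _
      have h3 : ∀ w, (b + v = c + w) ↔ (b - c + v = w) := by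
        intro w
        constructor
        · intro h; linear_combination h
        · intro h; linear_combination h
      simp only [h3]
      rw [Finset.sum_ite_eq]
    exact_mod_cast this
  rw [h2] at h1
  have : ((A.card)^2 * (A.card)^2 : ℝ) ≤ (A + A).card * EE A := by exact_mod_cast h1
  linarith [this, pow_add (A.card : ℝ) 2 2]

theorem card_le_YY (hA : mulSubgroup p A) : A.card * (YY A).card ≤ (A + A).card := by
  refine (orbit hA ((A+A).erase 0) (fun x hx => (mem_erase.1 hx).1) ?_).trans (Finset.card_le_card (Finset.erase_subset _ _))
  intro a ha x hx
  rw [mem_erase] at *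
  refine ⟨mul_ne_zero (ne_zero_of_mem hA ha) hx.1, ?_⟩
  obtain ⟨b, hb, c, hc, h⟩ := Finset.mem_add.1 hx.2
  rw [← h, mul_add]
  exact Finset.add_mem_add (hA.2.2.1 _ ha _ hb) (hA.2.2.1 _ ha _ hc)

theorem card_add_le (hA : mulSubgroup p A) : (A + A).card ≤ A.card * (YY A).card + 1 := by
  have h1 : ((A+A).erase 0).card ≤ A.card * (YY A).card := by
    apply Finset.card_le_mul_card_image
    intro y _
    refine le_trans (Finset.card_le_card ?_) (card_pow_eq_le A.card (card_pos hA) y)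
    intro x hx
    rw [mem_filter] at *
    exact ⟨mem_univ _, hx.2⟩
  have := Finset.pred_card_le_card_erase (s := A + A) (a := 0)
  omega

end Stmt6


namespace Stmt6
variable {p : ℕ} [Fact p.Prime] {A : Finset (ZMod p)}

/-- elements with many representations -/
def SS (A : Finset (ZMod p)) : Finset (ZMod p) := univ.filter (fun x => x ≠ 0 ∧ Th p A.card < rr A x)

theorem rr_layer (hA : mulSubgroup p A) (hn : 4 ≤ A.card) (hp : 16 * A.card^4 ≤ p^3) (m : ℕ) (hm : 1 ≤ m) :
    (((SS A).filter (fun x => m ≤ rr A x)).card : ℝ) * (m:ℝ)^3 ≤ 16384 * (A.card : ℝ)^3 := by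
  set n := A.card with hnn
  set T := (SS A).filter (fun x => m ≤ rr A x) with hT
  set f : ZMod p → ZMod p × ZMod p := fun x => ((x^n)⁻¹, ((-x)^n)⁻¹) with hf
  have h1 : T.card ≤ n * (T.image f).card := by
    apply Finset.card_le_mul_card_image
    intro y _
    refine le_trans (Finset.card_le_card ?_) (card_pow_eq_le n (card_pos hA) (y.1⁻¹))
    intro x hx
    rw [mem_filter] at *
    refine ⟨mem_univ _, ?_⟩
    rw [← hx.2, hf]; simp
  have h2 : (T.image f).card * m^3 ≤ 16384 * n^2 := by
    apply rich_count n hn hp m hm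
    intro k hk
    obtain ⟨x, hx, rfl⟩ := Finset.mem_image.1 hk
    rw [hT, SS, mem_filter, mem_filter] at hx
    obtain ⟨⟨_, hx0, hx1⟩, hx2⟩ := hx
    have h3 := rr_le_N hA hx0
    refine ⟨⟨?_, ?_, lt_of_lt_of_le hx1 h3⟩, hx2.trans h3⟩
    · exact inv_ne_zero (pow_ne_zero _ hx0)
    · exact inv_ne_zero (pow_ne_zero _ (neg_ne_zero.2 hx0))
  have h3 : T.card * m^3 ≤ 16384 * n^3 := by
    calc _ ≤ n * (T.image f).card * m^3 := by gcongr
      _ = n * ((T.image f).card * m^3) := by ring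
      _ ≤ n * (16384 * n^2) := by gcongr
      _ = _ := by ring
  exact_mod_cast h3

theorem tail (hA : mulSubgroup p A) (hn : 4 ≤ A.card) (hp : 16 * A.card^4 ≤ p^3) (M : ℕ) (hM : 1 ≤ M)
    (hM' : Th p A.card ≤ M) :
    ∑ x ∈ univ.filter (fun x => x ≠ 0 ∧ M < rr A x), (rr A x : ℝ)^2 ≤ 4 * (16384 * (A.card : ℝ)^3) / M := by
  have := layer_sq (SS A) (rr A) A.card _ M hM (fun x _ => rr_le_card x) (rr_layer hA hn hp)
  convert this using 2
  ext x
  simp only [SS, mem_filter, mem_univ, true_and]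
  constructor
  · rintro ⟨h1, h2⟩; exact ⟨⟨h1, by omega⟩, h2⟩
  · rintro ⟨⟨h1, _⟩, h2⟩; exact ⟨h1, h2⟩

theorem E3_bound (hA : mulSubgroup p A) (hn : 4 ≤ A.card) (hp : 16 * A.card^4 ≤ p^3) :
    ∑ x, (rr A x : ℝ)^3 ≤ (A.card : ℝ)^3 + 3 * (16384 * (A.card : ℝ)^3) * (1 + Real.log A.card)
      + (Th p A.card : ℝ)^2 * (A.card : ℝ)^2 := by
  have h1 := layer_cube (SS A) (rr A) A.card _ (fun x _ => rr_le_card x) (rr_layer hA hn hp)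
  rw [← sum_rr, Finset.mul_sum]
  have h2 : ∑ x, (rr A x : ℝ)^3 ≤ ∑ x, ((if x = 0 then (A.card:ℝ)^3 else 0) + (if x ∈ SS A then (rr A x : ℝ)^3 else 0) + (Th p A.card : ℝ)^2 * (rr A x)) := by
    apply Finset.sum_le_sum
    intro x _
    have h0 : (0:ℝ) ≤ (Th p A.card : ℝ)^2 * (rr A x) := by positivity
    by_cases hx : x = 0
    · subst hx
      rw [if_pos rfl, rr_zero]
      rw [rr_zero] at h0
      have : (0:ℝ) ≤ (if (0:ZMod p) ∈ SS A then (A.card : ℝ)^3 else 0) := by positivity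
      linarith
    · rw [if_neg hx]
      by_cases hx1 : x ∈ SS A
      · rw [if_pos hx1]; linarith
      · rw [if_neg hx1]
        have : rr A x ≤ Th p A.card := by
          by_contra h
          exact hx1 (by rw [SS, mem_filter]; exact ⟨mem_univ _, hx, by omega⟩)
        have h3 : (rr A x : ℝ) ≤ Th p A.card := by exact_mod_cast this
        rw [zero_add, zero_add, pow_succ]
        gcongr
  refine h2.trans ?_
  rw [Finset.sum_add_distrib, Finset.sum_add_distrib]
  have h3 : ∑ x : ZMod p, (if x = 0 then (A.card:ℝ)^3 else 0) = (A.card:ℝ)^3 := by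
    rw [Finset.sum_ite_eq']; simp
  have h4 : ∑ x : ZMod p, (if x ∈ SS A then (rr A x : ℝ)^3 else 0) = ∑ x ∈ SS A, (rr A x : ℝ)^3 := by
    rw [← Finset.sum_filter]; simp
  rw [h3, h4]
  linarith

/-- class of an element -/
def cls (n : ℕ) (l : ZMod p) : ZMod p × ZMod p := (l^n, (1-l)^n)

/-- indicator -/
def ii (A : Finset (ZMod p)) (x : ZMod p) : ℝ := if x ∈ A then 1 else 0

theorem ii_nonneg (x : ZMod p) : 0 ≤ ii A x := by unfold ii; positivity

/-- common representation count -/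
def CC (A : Finset (ZMod p)) (z w : ZMod p) : ℝ := ∑ a ∈ A, ii A (z - a) * ii A (w - a)

theorem CC_sq : ∑ z, ∑ w, (CC A z w)^2 = ∑ x, (rr A x : ℝ)^3 := by
  have h0 : ∀ a a', ∑ z, ii A (z - a) * ii A (z - a') = rr A (a - a') := by
    intro a a'
    rw [rr, Finset.card_filter]
    push_cast
    rw [← Fintype.sum_equiv (Equiv.addRight a) (fun v => ii A v * ii A (v + a - a')) _ (by intro v; simp)]
    rw [← Finset.sum_subset (Finset.subset_univ A)]
    · apply Finset.sum_congr rfl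
      intro v hv
      rw [ii, if_pos hv, one_mul, ii, show v + a - a' = a - a' + v by ring]
    · intro v _ hv
      rw [ii, if_neg hv, zero_mul]
  have h1 : ∑ x, (rr A x : ℝ)^3 = ∑ a ∈ A, ∑ a' ∈ A, (rr A (a - a') : ℝ)^2 := by
    rw [sum_pairs (fun x => (rr A x : ℝ)^2)]
    apply Finset.sum_congr rfl; intros; ring
  rw [h1]
  simp_rw [← h0]
  have h2 : ∀ z w, (CC A z w)^2 = ∑ a ∈ A, ∑ a' ∈ A, (ii A (z - a) * ii A (z - a')) * (ii A (w - a) * ii A (w - a')) := by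
    intro z w
    rw [CC, pow_two, Finset.sum_mul_sum]
    apply Finset.sum_congr rfl; intros
    apply Finset.sum_congr rfl; intros
    ring
  simp_rw [h2, pow_two, Finset.sum_mul_sum]
  have e1 : ∀ z : ZMod p, ∑ w, ∑ a ∈ A, ∑ a' ∈ A, (ii A (z - a) * ii A (z - a')) * (ii A (w - a) * ii A (w - a'))
     = ∑ a ∈ A, ∑ a' ∈ A, ∑ w, (ii A (z - a) * ii A (z - a')) * (ii A (w - a) * ii A (w - a')) := by
    intro z
    rw [Finset.sum_comm]
    apply Finset.sum_congr rfl; intros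
    rw [Finset.sum_comm]
  simp_rw [e1]
  rw [Finset.sum_comm]
  apply Finset.sum_congr rfl; intros
  rw [Finset.sum_comm]

open Classical in
/-- poor pairs of sums -/
noncomputable def ZZ (A : Finset (ZMod p)) : Finset (ZMod p × ZMod p) :=
  univ.filter (fun q => q.1 ∈ (A+A).erase 0 ∧ q.2 ∈ (A+A).erase 0 ∧ q.1 ≠ q.2 ∧ ¬ Rich A.card (cls A.card (q.1 / q.2)))

theorem ZZ_count (x : ZMod p) :
    ((ZZ A).filter (fun q => q.1 - q.2 = x)).card ≤ Th p A.card * (YY A).card^2 := by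
  classical
  set n := A.card with hn
  set f : ZMod p × ZMod p → ZMod p × ZMod p := fun q => (q.1^n, q.2^n) with hf
  set T := (ZZ A).filter (fun q => q.1 - q.2 = x) with hT
  have h1 : T.card ≤ Th p n * (T.image f).card := by
    apply Finset.card_le_mul_card_image
    intro y hy
    obtain ⟨q0, hq0, rfl⟩ := Finset.mem_image.1 hy
    rw [hT, ZZ, mem_filter, mem_filter] at hq0
    obtain ⟨⟨_, hz0, hw0, hne0, hpoor⟩, hx0⟩ := hq0
    rw [mem_erase] at hz0 hw0
    have h2 : (Ns n (cls n (q0.1/q0.2))).card ≤ Th p n := by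
      by_contra hcon
      apply hpoor
      refine ⟨pow_ne_zero _ (div_ne_zero hz0.1 hw0.1), pow_ne_zero _ ?_, not_le.1 hcon⟩
      intro h
      apply hne0
      rw [sub_eq_zero, eq_div_iff hw0.1, one_mul] at h
      exact h.symm
    refine le_trans ?_ h2
    apply Finset.card_le_card_of_injOn (fun q => q.1/q.2)
    · intro q hq
      rw [mem_coe, mem_filter, hT, mem_filter, ZZ, mem_filter] at hq
      obtain ⟨⟨⟨_, hz, hw, hne, _⟩, hx⟩, he⟩ := hq
      rw [mem_erase] at hz hw
      rw [mem_coe, mem_Ns, cls]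
      rw [hf] at he
      simp only [Prod.mk.injEq] at he
      simp only
      constructor
      · rw [div_pow, div_pow, he.1, he.2]
      · have e1 : ∀ q : ZMod p × ZMod p, q.2 ≠ 0 → q.1 - q.2 = x → 1 - q.1/q.2 = (-x)/q.2 := by
          intro q h h'
          rw [← h']; field_simp; ring
        rw [e1 q hw.1 hx, e1 q0 hw0.1 hx0, div_pow, div_pow, he.2]
    · intro q hq q' hq' h
      rw [mem_coe, mem_filter, hT, mem_filter, ZZ, mem_filter] at hq hq'
      obtain ⟨⟨⟨_, hz, hw, hne, _⟩, hx⟩, _⟩ := hq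
      obtain ⟨⟨⟨_, hz', hw', hne', _⟩, hx'⟩, _⟩ := hq'
      rw [mem_erase] at hz hw hz' hw'
      simp only at h
      rw [div_eq_div_iff hw.1 hw'.1] at h
      have hxne : x ≠ 0 := by rw [← hx]; exact sub_ne_zero.2 hne
      have h3 : x * q'.2 = x * q.2 := by
        linear_combination h - q'.2 * hx + q.2 * hx'
      have h4 := mul_left_cancel₀ hxne h3
      ext
      · linear_combination hx - hx' - h4
      · exact h4.symm
  have h2 : (T.image f).card ≤ (YY A).card^2 := by
    rw [pow_two, ← Finset.card_product]
    apply Finset.card_le_card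
    intro y hy
    obtain ⟨q, hq, rfl⟩ := Finset.mem_image.1 hy
    rw [hT, ZZ, mem_filter, mem_filter] at hq
    rw [mem_product]
    exact ⟨Finset.mem_image_of_mem _ hq.1.2.1, Finset.mem_image_of_mem _ hq.1.2.2.1⟩
  exact h1.trans (Nat.mul_le_mul_left _ h2)

theorem poor_bound (hA : mulSubgroup p A) (P : Finset (ZMod p × ZMod p))
    (hP : ∀ q ∈ P, q.1 ∈ A ∧ q.2 ∈ A ∧ q.1 ≠ q.2 ∧ 1 + q.1 ≠ 0 ∧ 1 + q.2 ≠ 0 ∧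
      ¬ Rich A.card (cls A.card ((1+q.1)/(1+q.2)))) :
    ((A.card : ℝ) * ∑ q ∈ P, (rr A (q.1 - q.2) : ℝ))^2 ≤
      (∑ x, (rr A x : ℝ)^3) * ((Th p A.card : ℝ) * (YY A).card^2 * EE A) := by
  classical
  have h1 : (A.card : ℝ) * ∑ q ∈ P, (rr A (q.1 - q.2) : ℝ) ≤ ∑ q ∈ ZZ A, CC A q.1 q.2 * rr A (q.1 - q.2) := by
    set G : (ZMod p × ZMod p) × ZMod p → ℝ := fun s => ii A (s.1.1 - s.2) * ii A (s.1.2 - s.2) * rr A (s.1.1 - s.1.2) with hG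
    have e1 : ∑ q ∈ ZZ A, CC A q.1 q.2 * rr A (q.1 - q.2) = ∑ s ∈ ZZ A ×ˢ A, G s := by
      rw [Finset.sum_product]
      apply Finset.sum_congr rfl
      intro q _
      rw [CC, Finset.sum_mul]
    set φ : ZMod p × (ZMod p × ZMod p) → (ZMod p × ZMod p) × ZMod p := fun u => ((u.1 + u.1 * u.2.1, u.1 + u.1 * u.2.2), u.1) with hφ
    have e2 : (A.card : ℝ) * ∑ q ∈ P, (rr A (q.1 - q.2) : ℝ) = ∑ u ∈ A ×ˢ P, G (φ u) := by
      rw [Finset.sum_product, ← nsmul_eq_mul, ← Finset.sum_const]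
      apply Finset.sum_congr rfl
      intro a ha
      apply Finset.sum_congr rfl
      intro q hq
      have hq' := hP q hq
      simp only [hG, hφ, add_sub_cancel_left, ii]
      rw [if_pos (hA.2.2.1 _ ha _ hq'.1), if_pos (hA.2.2.1 _ ha _ hq'.2.1), one_mul, one_mul]
      rw [← rr_mul hA ha]
      congr 2
      ring
    rw [e1, e2]
    have hinj : Set.InjOn φ (A ×ˢ P : Finset _) := by
      intro u hu v hv h
      rw [mem_coe, mem_product] at hu hv
      simp only [hφ, Prod.mk.injEq] at h
      obtain ⟨⟨h1, h2⟩, h3⟩ := h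
      have h0 := ne_zero_of_mem hA hu.1
      rw [← h3] at h1 h2
      have h1' := mul_left_cancel₀ h0 (add_left_cancel h1)
      have h2' := mul_left_cancel₀ h0 (add_left_cancel h2)
      ext <;> assumption
    rw [← Finset.sum_image (f := G) hinj]
    apply Finset.sum_le_sum_of_subset_of_nonneg
    · intro s hs
      obtain ⟨u, hu, rfl⟩ := Finset.mem_image.1 hs
      rw [mem_product] at hu ⊢
      obtain ⟨q1, q2, q3, q4, q5, q6⟩ := hP _ hu.2
      have h0 := ne_zero_of_mem hA hu.1
      refine ⟨?_, hu.1⟩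
      rw [ZZ, mem_filter]
      simp only [hφ, mem_erase]
      have e3 : ∀ b, u.1 + u.1 * b = u.1 * (1 + b) := fun b => by ring
      refine ⟨mem_univ _, ⟨?_, Finset.add_mem_add hu.1 (hA.2.2.1 _ hu.1 _ q1)⟩, ⟨?_, Finset.add_mem_add hu.1 (hA.2.2.1 _ hu.1 _ q2)⟩, ?_, ?_⟩
      · rw [e3]; exact mul_ne_zero h0 q4
      · rw [e3]; exact mul_ne_zero h0 q5
      · intro h; exact q3 (mul_left_cancel₀ h0 (add_left_cancel h))
      · rw [e3, e3, mul_div_mul_left _ _ h0]; exact q6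
    · intro s _ _
      simp only [hG]
      exact mul_nonneg (mul_nonneg (ii_nonneg _) (ii_nonneg _)) (Nat.cast_nonneg _)
  have h2 : (∑ q ∈ ZZ A, CC A q.1 q.2 * rr A (q.1 - q.2))^2 ≤ (∑ q ∈ ZZ A, (CC A q.1 q.2)^2) * ∑ q ∈ ZZ A, (rr A (q.1 - q.2) : ℝ)^2 :=
    Finset.sum_mul_sq_le_sq_mul_sq _ _ _
  have h3 : ∑ q ∈ ZZ A, (CC A q.1 q.2)^2 ≤ ∑ x, (rr A x : ℝ)^3 := by
    rw [← CC_sq, ← Fintype.sum_prod_type']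
    apply Finset.sum_le_sum_of_subset_of_nonneg (Finset.subset_univ _)
    intros; positivity
  have h4 : ∑ q ∈ ZZ A, (rr A (q.1 - q.2) : ℝ)^2 ≤ (Th p A.card : ℝ) * (YY A).card^2 * EE A := by
    rw [← Finset.sum_fiberwise (ZZ A) (fun q => q.1 - q.2), EE_cast, Finset.mul_sum]
    apply Finset.sum_le_sum
    intro x _
    have : ∀ q ∈ (ZZ A).filter (fun q => q.1 - q.2 = x), (rr A (q.1 - q.2) : ℝ)^2 = (rr A x : ℝ)^2 := by
      intro q hq
      rw [(mem_filter.1 hq).2]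
    rw [Finset.sum_congr rfl this, Finset.sum_const, nsmul_eq_mul]
    gcongr
    exact_mod_cast ZZ_count x
  have h5 : 0 ≤ (A.card : ℝ) * ∑ q ∈ P, (rr A (q.1 - q.2) : ℝ) := by positivity
  calc _ ≤ (∑ q ∈ ZZ A, CC A q.1 q.2 * rr A (q.1 - q.2))^2 := by gcongr
    _ ≤ _ := h2
    _ ≤ _ := by gcongr

end Stmt6


namespace Stmt6
variable {p : ℕ} [Fact p.Prime] {A : Finset (ZMod p)}

/-- twisted class -/
def tw (n : ℕ) (k : ZMod p × ZMod p) : ZMod p × ZMod p := (k.1 / k.2, ((-1)^n * k.2)⁻¹)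

theorem tw_inj (n : ℕ) {k k' : ZMod p × ZMod p} (hk : k.2 ≠ 0) (h : tw n k = tw n k') : k = k' := by
  simp only [tw, Prod.mk.injEq] at h
  have h1 := inv_injective h.2
  have h2 : ((-1 : ZMod p))^n ≠ 0 := pow_ne_zero _ (by simp)
  have h3 := mul_left_cancel₀ h2 h1
  have h4 := h.1
  rw [← h3, div_left_inj' hk] at h4
  ext <;> assumption

theorem fibre_bound (hA : mulSubgroup p A) (P : Finset (ZMod p × ZMod p))
    (hP : ∀ q ∈ P, q.1 ∈ A ∧ q.2 ∈ A ∧ q.1 ≠ q.2 ∧ 1 + q.1 ≠ 0 ∧ 1 + q.2 ≠ 0) (l : ZMod p) :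
    (P.filter (fun q => (1+q.1)/(1+q.2) = l)).card ≤ (Ns A.card (tw A.card (cls A.card l))).card := by
  set n := A.card
  rcases (P.filter (fun q => (1+q.1)/(1+q.2) = l)).eq_empty_or_nonempty with h | ⟨q0, hq0⟩
  · rw [h]; simp
  rw [mem_filter] at hq0
  obtain ⟨_, _, a3, a4, a5⟩ := hP _ hq0.1
  have hl0 : l ≠ 0 := by rw [← hq0.2]; exact div_ne_zero a4 a5
  have hl1 : 1 - l ≠ 0 := by
    intro h
    rw [← hq0.2, sub_eq_zero, eq_div_iff a5, one_mul] at h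
    exact a3 (add_left_cancel h).symm
  apply Finset.card_le_card_of_injOn (fun q => l * q.2 / (1 - l))
  · intro q hq
    rw [mem_coe, mem_filter] at hq
    obtain ⟨b1, b2, b3, b4, b5⟩ := hP _ hq.1
    have hq2 := hq.2
    rw [div_eq_iff b5] at hq2
    rw [mem_coe, mem_Ns]
    simp only [tw, cls]
    constructor
    · rw [div_pow, mul_pow, pow_card hA b2, mul_one]
    · have : 1 - l * q.2 / (1-l) = q.1 * (-1 * (1 - l))⁻¹ := by
        have h3 : q.1 = l * (1 + q.2) - 1 := by rw [← hq2]; ring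
        rw [h3, mul_inv]
        field_simp
        ring
      rw [this, mul_pow, pow_card hA b1, one_mul, inv_pow, mul_pow]
  · intro q hq q' hq' h
    rw [mem_coe, mem_filter] at hq hq'
    obtain ⟨b1, b2, b3, b4, b5⟩ := hP _ hq.1
    obtain ⟨c1, c2, c3, c4, c5⟩ := hP _ hq'.1
    have h2 : q.2 = q'.2 := mul_left_cancel₀ hl0 ((div_left_inj' hl1).1 h)
    have e1 := hq.2
    have e2 := hq'.2
    rw [div_eq_iff b5] at e1
    rw [div_eq_iff c5, ← h2, ← e1] at e2
    ext
    · exact (add_left_cancel e2).symm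
    · exact h2

theorem rich_a (n : ℕ) (hn : 4 ≤ n) (hp : 16 * n^4 ≤ p^3) (Lam : Finset (ZMod p))
    (hL : ∀ l ∈ Lam, Rich n (cls n l)) :
    ∑ l ∈ Lam, ((Ns n (tw n (cls n l))).card : ℝ)^2 ≤ 6 * (16384 * n^2) * (1 + Real.log n) := by
  have h1 : ∑ l ∈ Lam, ((Ns n (tw n (cls n l))).card : ℝ)^2 ≤ ∑ k ∈ RS p n, ((Ns n k).card : ℝ) * ((Ns n (tw n k)).card : ℝ)^2 := by
    rw [← Finset.sum_fiberwise_of_maps_to (s := Lam) (t := RS p n) (g := cls n) (fun l hl => (mem_RS n _).2 (hL l hl))]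
    apply Finset.sum_le_sum
    intro k _
    have : ∀ l ∈ Lam.filter (fun l => cls n l = k), ((Ns n (tw n (cls n l))).card : ℝ)^2 = ((Ns n (tw n k)).card : ℝ)^2 := by
      intro l hl; rw [(mem_filter.1 hl).2]
    rw [Finset.sum_congr rfl this, Finset.sum_const, nsmul_eq_mul]
    gcongr
    intro l hl
    rw [mem_Ns, ← (mem_filter.1 hl).2]
    exact ⟨rfl, rfl⟩
  have h2 : ∀ k ∈ RS p n, ((Ns n k).card : ℝ) * ((Ns n (tw n k)).card : ℝ)^2 ≤
      ((Ns n k).card : ℝ)^3 + (if tw n k ∈ RS p n then ((Ns n (tw n k)).card : ℝ)^3 else 0) := by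
    intro k hk
    rw [mem_RS] at hk
    have hx : (0:ℝ) ≤ (Ns n k).card := by positivity
    have hy : (0:ℝ) ≤ (Ns n (tw n k)).card := by positivity
    have key : (Ns n (tw n k)).card ≤ (Ns n k).card → ((Ns n k).card : ℝ) * ((Ns n (tw n k)).card : ℝ)^2 ≤ ((Ns n k).card : ℝ)^3 := by
      intro h
      have h' : ((Ns n (tw n k)).card : ℝ) ≤ (Ns n k).card := by exact_mod_cast h
      calc _ ≤ ((Ns n k).card : ℝ) * ((Ns n k).card : ℝ)^2 := by gcongr
        _ = _ := by ring
    split_ifs with h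
    · rcases le_total (Ns n (tw n k)).card (Ns n k).card with h3 | h3
      · have := key h3
        have : (0:ℝ) ≤ ((Ns n (tw n k)).card : ℝ)^3 := by positivity
        linarith
      · have h' : ((Ns n k).card : ℝ) ≤ (Ns n (tw n k)).card := by exact_mod_cast h3
        have h4 : ((Ns n k).card : ℝ) * ((Ns n (tw n k)).card : ℝ)^2 ≤ ((Ns n (tw n k)).card : ℝ) * ((Ns n (tw n k)).card : ℝ)^2 := by gcongr
        have : (0:ℝ) ≤ ((Ns n k).card : ℝ)^3 := by positivity
        nlinarith
    · rw [add_zero]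
      apply key
      by_contra hcon
      apply h
      rw [mem_RS]
      refine ⟨div_ne_zero hk.1 hk.2.1, inv_ne_zero (mul_ne_zero (pow_ne_zero _ (by simp)) hk.2.1), ?_⟩
      exact hk.2.2.trans (not_le.1 hcon)
  have h3 : ∑ k ∈ RS p n, (if tw n k ∈ RS p n then ((Ns n (tw n k)).card : ℝ)^3 else 0) ≤ ∑ k ∈ RS p n, ((Ns n k).card : ℝ)^3 := by
    rw [← Finset.sum_filter]
    have hinj : Set.InjOn (tw n) (((RS p n).filter (fun k => tw n k ∈ RS p n) : Finset (ZMod p × ZMod p)) : Set (ZMod p × ZMod p)) := by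
      intro k hk k' _ h
      rw [mem_coe, mem_filter, mem_RS] at hk
      exact tw_inj n hk.1.2.1 h
    rw [← Finset.sum_image (f := fun k => ((Ns n k).card : ℝ)^3) hinj]
    apply Finset.sum_le_sum_of_subset_of_nonneg
    · intro k hk
      obtain ⟨k', hk', rfl⟩ := Finset.mem_image.1 hk
      exact (mem_filter.1 hk').2
    · intros; positivity
  have h4 := rich_cube (p := p) n hn hp
  have h5 := Finset.sum_le_sum h2
  rw [Finset.sum_add_distrib] at h5
  linarith

theorem rich_b (hA : mulSubgroup p A) (hn : 4 ≤ A.card) (hp : 16 * A.card^4 ≤ p^3)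
    (k : ℕ) (Lam : Finset (ZMod p)) (hL : ∀ l ∈ Lam, Rich A.card (cls A.card l) ∧ ∃ b ∈ A, ∃ c ∈ A,
      b ≠ c ∧ 1 + b ≠ 0 ∧ 1 + c ≠ 0 ∧ (1+b)/(1+c) = l ∧ k ≤ rr A (b - c)) :
    k^4 * Lam.card^3 ≤ 16384 * ((YY A).card^2 * EE A)^2 := by
  set n := A.card with hnn
  have h1 : Lam.card ≤ ∑ κ ∈ Lam.image (cls n), (Ns n κ).card := by
    rw [Finset.card_eq_sum_card_image (cls n)]
    apply Finset.sum_le_sum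
    intro κ _
    apply Finset.card_le_card
    intro l hl
    rw [mem_Ns, ← (mem_filter.1 hl).2]
    exact ⟨rfl, rfl⟩
  have h2 := rich_lemma n hn hp (Lam.image (cls n)) (fun κ hκ => by
    obtain ⟨l, hl, rfl⟩ := Finset.mem_image.1 hκ
    exact (hL l hl).1)
  set X := (univ : Finset (ZMod p)).filter (fun x => x ≠ 0 ∧ k ≤ rr A x) with hX
  have h3 : n * (X.image (fun z => z^n)).card ≤ X.card := by
    apply orbit hA
    · intro x hx; exact (mem_filter.1 hx).2.1
    · intro a ha x hx
      rw [hX, mem_filter] at *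
      exact ⟨mem_univ _, mul_ne_zero (ne_zero_of_mem hA ha) hx.2.1, by rw [rr_mul hA ha]; exact hx.2.2⟩
  have h4 : X.card * k^2 ≤ EE A := by
    rw [← smul_eq_mul]
    calc _ ≤ ∑ x ∈ X, (rr A x)^2 := by
            apply Finset.card_nsmul_le_sum
            intro x hx
            exact Nat.pow_le_pow_left (mem_filter.1 hx).2.2 2
      _ ≤ _ := by
            unfold EE
            apply Finset.sum_le_sum_of_subset_of_nonneg (Finset.subset_univ _)
            intros; positivity
  have h5 : (Lam.image (cls n)).card ≤ (YY A).card^2 * (X.image (fun z => z^n)).card := by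
    have : Lam.image (cls n) ⊆ ((YY A ×ˢ YY A) ×ˢ (X.image (fun z => z^n))).image
        (fun s => (s.1.1 / s.1.2, (-1)^n * s.2 / s.1.2)) := by
      intro κ hκ
      obtain ⟨l, hl, rfl⟩ := Finset.mem_image.1 hκ
      obtain ⟨_, b, hb, c, hc, hbc, hb1, hc1, hl, hk⟩ := hL l hl
      rw [Finset.mem_image]
      refine ⟨(((1+b)^n, (1+c)^n), (b-c)^n), ?_, ?_⟩
      · rw [mem_product, mem_product]
        refine ⟨⟨Finset.mem_image_of_mem _ ?_, Finset.mem_image_of_mem _ ?_⟩, Finset.mem_image_of_mem _ ?_⟩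
        · exact mem_erase.2 ⟨hb1, Finset.add_mem_add hA.2.1 hb⟩
        · exact mem_erase.2 ⟨hc1, Finset.add_mem_add hA.2.1 hc⟩
        · exact mem_filter.2 ⟨mem_univ _, sub_ne_zero.2 hbc, hk⟩
      · simp only [cls]
        rw [← hl, ← div_pow, ← mul_pow, ← div_pow]
        congr 2
        field_simp
        ring
    refine (Finset.card_le_card this).trans (Finset.card_image_le.trans ?_)
    rw [card_product, card_product, pow_two]
  have h6 : k^2 * ((Lam.image (cls n)).card * n) ≤ (YY A).card^2 * EE A := by
    calc _ ≤ k^2 * ((YY A).card^2 * (X.image (fun z => z^n)).card * n) := by gcongr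
      _ = (YY A).card^2 * ((n * (X.image (fun z => z^n)).card) * k^2) := by ring
      _ ≤ (YY A).card^2 * (X.card * k^2) := by gcongr
      _ ≤ _ := by gcongr
  calc k^4 * Lam.card^3 ≤ k^4 * (16384 * ((Lam.image (cls n)).card * n)^2) := by
        gcongr
        exact (Nat.pow_le_pow_left h1 3).trans h2
    _ = 16384 * (k^2 * ((Lam.image (cls n)).card * n))^2 := by ring
    _ ≤ _ := by gcongr

theorem fin_alg (S T U V W Q R : ℝ) (hS : 0 ≤ S) (hST : S ≤ T) (hT : T^2 ≤ U * V) (hU : U ≤ Q)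
    (hU0 : 0 ≤ U) (hV0 : 0 ≤ V) (hV : V ≤ 2 * W) (hW : W^3 ≤ R) : S^6 ≤ Q^3 * (8 * R) := by
  have hQ : 0 ≤ Q := hU0.trans hU
  have hW0 : 0 ≤ W := by linarith
  calc S^6 ≤ T^6 := by gcongr
    _ = (T^2)^3 := by ring
    _ ≤ (U * V)^3 := by gcongr
    _ ≤ (Q * (2 * W))^3 := by gcongr
    _ = Q^3 * (8 * W^3) := by ring
    _ ≤ _ := by gcongr

theorem rich_bound (hA : mulSubgroup p A) (hn : 4 ≤ A.card) (hp : 16 * A.card^4 ≤ p^3) (M : ℕ)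
    (P : Finset (ZMod p × ZMod p))
    (hP : ∀ q ∈ P, q.1 ∈ A ∧ q.2 ∈ A ∧ q.1 ≠ q.2 ∧ 1 + q.1 ≠ 0 ∧ 1 + q.2 ≠ 0)
    (hR : ∀ q ∈ P, Rich A.card (cls A.card ((1+q.1)/(1+q.2))))
    (hM : ∀ q ∈ P, rr A (q.1 - q.2) ≤ M) :
    (∑ q ∈ P, (rr A (q.1 - q.2) : ℝ))^6 ≤ (6 * (16384 * (A.card:ℝ)^2) * (1 + Real.log A.card))^3 *
      (8 * (4 * (16384 * (((YY A).card:ℝ)^2 * EE A)^2) * (M:ℝ)^2)) := by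
  set lam : ZMod p × ZMod p → ZMod p := fun q => (1+q.1)/(1+q.2) with hlam
  set Lam := P.image lam with hLam
  set F : ZMod p → Finset (ZMod p × ZMod p) := fun l => P.filter (fun q => lam q = l) with hF
  set m : ZMod p → ℕ := fun l => (F l).sup (fun q => rr A (q.1 - q.2)) with hm
  have h1 : ∑ q ∈ P, (rr A (q.1 - q.2) : ℝ) ≤ ∑ l ∈ Lam, ((F l).card : ℝ) * m l := by
    rw [← Finset.sum_fiberwise_of_maps_to (s := P) (t := Lam) (g := lam) (fun q hq => Finset.mem_image_of_mem _ hq)]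
    apply Finset.sum_le_sum
    intro l _
    rw [← nsmul_eq_mul]
    apply Finset.sum_le_card_nsmul
    intro q hq
    have : rr A (q.1 - q.2) ≤ m l := Finset.le_sup (f := fun q : ZMod p × ZMod p => rr A (q.1 - q.2)) hq
    exact_mod_cast this
  have h2 : (∑ l ∈ Lam, ((F l).card : ℝ) * m l)^2 ≤ (∑ l ∈ Lam, ((F l).card : ℝ)^2) * ∑ l ∈ Lam, (m l : ℝ)^2 :=
    Finset.sum_mul_sq_le_sq_mul_sq _ _ _
  have hLR : ∀ l ∈ Lam, Rich A.card (cls A.card l) := by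
    intro l hl
    obtain ⟨q, hq, rfl⟩ := Finset.mem_image.1 hl
    exact hR q hq
  have h3 : ∑ l ∈ Lam, ((F l).card : ℝ)^2 ≤ 6 * (16384 * (A.card:ℝ)^2) * (1 + Real.log A.card) := by
    refine le_trans ?_ (rich_a A.card hn hp Lam hLR)
    apply Finset.sum_le_sum
    intro l _
    have := fibre_bound hA P hP l
    gcongr
  have hmM : ∀ l, m l ≤ M := by
    intro l
    apply Finset.sup_le
    intro q hq
    exact hM q (mem_filter.1 hq).1
  set a : ℕ → ℝ := fun k => k * ((Lam.filter (fun l => k ≤ m l)).card : ℝ) with ha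
  have h4 : ∑ l ∈ Lam, (m l : ℝ)^2 ≤ 2 * ∑ k ∈ Icc 1 M, a k := by
    have hsq : ∀ k : ℕ, (k:ℝ)^2 ≤ ∑ i ∈ Icc 1 k, 2 * (i:ℝ) := by
      intro k
      induction k with
      | zero => simp
      | succ k ih =>
        rw [Finset.sum_Icc_succ_top (by omega)]
        push_cast
        nlinarith
    have : ∑ l ∈ Lam, (m l : ℝ)^2 ≤ ∑ l ∈ Lam, ∑ i ∈ Icc 1 M, if i ≤ m l then 2 * (i:ℝ) else 0 := by
      apply Finset.sum_le_sum
      intro l _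
      refine (hsq _).trans (le_of_eq ?_)
      rw [← Finset.sum_filter]
      apply Finset.sum_congr _ (fun _ _ => rfl)
      ext i
      have := hmM l
      simp only [mem_Icc, mem_filter]
      omega
    refine this.trans (le_of_eq ?_)
    rw [Finset.sum_comm, Finset.mul_sum]
    apply Finset.sum_congr rfl
    intro i _
    rw [← Finset.sum_filter, Finset.sum_const, nsmul_eq_mul, ha]
    ring
  have h5 : (∑ k ∈ Icc 1 M, a k)^3 ≤ 4 * (16384 * (((YY A).card:ℝ)^2 * EE A)^2) * (M:ℝ)^2 := by
    apply sum_third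
    · positivity
    · intro k hk
      have := rich_b hA hn hp k (Lam.filter (fun l => k ≤ m l)) (fun l hl => by
        rw [mem_filter] at hl
        refine ⟨hLR l hl.1, ?_⟩
        have hne : (F l).Nonempty := by
          obtain ⟨q, hq, rfl⟩ := Finset.mem_image.1 hl.1
          exact ⟨q, mem_filter.2 ⟨hq, rfl⟩⟩
        obtain ⟨q, hq, he⟩ := Finset.exists_mem_eq_sup (F l) hne (fun q => rr A (q.1 - q.2))
        have hq' := mem_filter.1 hq
        obtain ⟨b1, b2, b3, b4, b5⟩ := hP q hq'.1
        refine ⟨q.1, b1, q.2, b2, b3, b4, b5, hq'.2, ?_⟩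
        rw [← he]; exact hl.2)
      have h6 : (k:ℝ)^4 * ((Lam.filter (fun l => k ≤ m l)).card:ℝ)^3 ≤ 16384 * (((YY A).card:ℝ)^2 * EE A)^2 := by
        exact_mod_cast this
      calc _ = (k:ℝ)^4 * ((Lam.filter (fun l => k ≤ m l)).card:ℝ)^3 := by rw [ha]; ring
        _ ≤ _ := h6
    · intro k; positivity
  have h6 : 0 ≤ ∑ q ∈ P, (rr A (q.1 - q.2) : ℝ) := by positivity
  have h7 : 0 ≤ ∑ k ∈ Icc 1 M, a k := Finset.sum_nonneg (fun k _ => by positivity)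
  have h8 : 0 ≤ Real.log A.card := Real.log_natCast_nonneg _
  exact fin_alg _ _ _ _ _ _ _ h6 h1 h2 h3 (Finset.sum_nonneg (fun _ _ => by positivity))
    (Finset.sum_nonneg (fun _ _ => by positivity)) h4 h5

end Stmt6


namespace Stmt6

section
variable {p : ℕ} [Fact p.Prime] {A : Finset (ZMod p)}

theorem decomp (hA : mulSubgroup p A) (hn : 4 ≤ A.card) (hp : 16 * A.card^4 ≤ p^3) (M : ℕ) (hM : 1 ≤ M)
    (hM' : Th p A.card ≤ M) : ∃ P : Finset (ZMod p × ZMod p),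
    (∀ q ∈ P, (q.1 ∈ A ∧ q.2 ∈ A ∧ q.1 ≠ q.2 ∧ 1 + q.1 ≠ 0 ∧ 1 + q.2 ≠ 0) ∧ rr A (q.1 - q.2) ≤ M) ∧
    (EE A : ℝ) ≤ ∑ q ∈ P, (rr A (q.1 - q.2) : ℝ) + (A.card:ℝ)^2 + 2 * (EE A / A.card) +
      4 * (16384 * (A.card : ℝ)^3) / M := by
  have hn0 : (0:ℝ) < A.card := by exact_mod_cast card_pos hA
  refine ⟨(A ×ˢ A).filter (fun q => q.1 ≠ q.2 ∧ 1 + q.1 ≠ 0 ∧ 1 + q.2 ≠ 0 ∧ rr A (q.1 - q.2) ≤ M), ?_, ?_⟩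
  · intro q hq
    rw [mem_filter, mem_product] at hq
    tauto
  rw [Finset.sum_filter, Finset.sum_product]
  have h1 : ∑ b ∈ A, ∑ c ∈ A, (rr A (b - c) : ℝ) ≤ ∑ b ∈ A, ∑ c ∈ A,
      ((if b ≠ c ∧ 1 + b ≠ 0 ∧ 1 + c ≠ 0 ∧ rr A (b - c) ≤ M then (rr A (b - c) : ℝ) else 0) +
        (if b = c then (A.card : ℝ) else 0) + (if 1 + b = 0 then (rr A (b - c) : ℝ) else 0) +
        (if 1 + c = 0 then (rr A (b - c) : ℝ) else 0) +
        (if b - c ≠ 0 ∧ M < rr A (b - c) then (rr A (b - c) : ℝ) else 0)) := by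
    apply Finset.sum_le_sum
    intro b _
    apply Finset.sum_le_sum
    intro c _
    have h0 : (0:ℝ) ≤ rr A (b - c) := by positivity
    have h0' : (0:ℝ) ≤ A.card := by positivity
    by_cases e1 : b = c
    · subst e1
      simp only [sub_self, rr_zero]
      split_ifs <;> simp_all <;> linarith
    · by_cases e2 : 1 + b = 0
      · rw [if_neg e1, if_pos e2]
        split_ifs <;> linarith
      · by_cases e3 : 1 + c = 0
        · rw [if_neg e1, if_neg e2, if_pos e3]
          split_ifs <;> linarith
        · by_cases e4 : rr A (b - c) ≤ M
          · rw [if_pos ⟨e1, e2, e3, e4⟩]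
            split_ifs <;> linarith
          · rw [if_pos (c := b - c ≠ 0 ∧ M < rr A (b - c)) ⟨sub_ne_zero.2 e1, not_le.1 e4⟩]
            split_ifs <;> linarith
  rw [sum_pairs_rr] at h1
  simp only [Finset.sum_add_distrib] at h1
  have k2 : ∑ b ∈ A, ∑ c ∈ A, (if b = c then (A.card : ℝ) else 0) = (A.card : ℝ)^2 := by
    have : ∀ b ∈ A, ∑ c ∈ A, (if b = c then (A.card : ℝ) else 0) = A.card := by
      intro b hb
      rw [Finset.sum_ite_eq, if_pos hb]
    rw [Finset.sum_congr rfl this]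
    simp [pow_two]
  have gen : ∀ g : ZMod p → ℝ, (∀ b ∈ A, g b ≤ EE A / A.card) → ∑ b ∈ A, (if 1 + b = 0 then g b else 0) ≤ EE A / A.card := by
    intro g hg
    have h0 : (0:ℝ) ≤ EE A / A.card := by positivity
    have e : ∀ b : ZMod p, 1 + b = 0 ↔ b = -1 := fun b => by
      rw [eq_neg_iff_add_eq_zero, add_comm]
    simp only [e]
    rw [Finset.sum_ite_eq']
    split_ifs with h
    · exact hg _ h
    · exact h0
  have k3 : ∑ b ∈ A, ∑ c ∈ A, (if 1 + b = 0 then (rr A (b - c) : ℝ) else 0) ≤ EE A / A.card := by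
    have : ∀ b ∈ A, ∑ c ∈ A, (if 1 + b = 0 then (rr A (b - c) : ℝ) else 0) = if 1 + b = 0 then ∑ c ∈ A, (rr A (b - c) : ℝ) else 0 := by
      intro b _
      split_ifs <;> simp
    rw [Finset.sum_congr rfl this]
    apply gen
    intro b hb
    rw [le_div_iff₀ hn0, ← sum_one hA hb]; linarith
  have k4 : ∑ b ∈ A, ∑ c ∈ A, (if 1 + c = 0 then (rr A (b - c) : ℝ) else 0) ≤ EE A / A.card := by
    rw [Finset.sum_comm]
    have : ∀ b ∈ A, ∑ c ∈ A, (if 1 + b = 0 then (rr A (c - b) : ℝ) else 0) = if 1 + b = 0 then ∑ c ∈ A, (rr A (c - b) : ℝ) else 0 := by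
      intro b _
      split_ifs <;> simp
    rw [Finset.sum_congr rfl this]
    apply gen
    intro b hb
    rw [le_div_iff₀ hn0, ← sum_one' hA hb]; linarith
  have k5 : ∑ b ∈ A, ∑ c ∈ A, (if b - c ≠ 0 ∧ M < rr A (b - c) then (rr A (b - c) : ℝ) else 0) ≤ 4 * (16384 * (A.card : ℝ)^3) / M := by
    refine le_trans (le_of_eq ?_) (tail hA hn hp M hM hM')
    rw [sum_pairs (fun x => if x ≠ 0 ∧ M < rr A x then (rr A x : ℝ) else 0), Finset.sum_filter]
    apply Finset.sum_congr rfl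
    intro x _
    split_ifs <;> ring
  linarith

theorem core (hA : mulSubgroup p A) (hn : 8 ≤ A.card) (hp : 16 * A.card^4 ≤ p^3) :
    (EE A : ℝ) < 8 * (A.card : ℝ)^2 ∨
    (∃ M : ℝ, 0 ≤ M ∧ M * EE A ≤ 82 * ((1 + A.card^2/p : ℕ) : ℝ) * EE A + 524288 * (A.card : ℝ)^3 ∧
      (EE A / 4 : ℝ)^6 ≤ (6 * (16384 * (A.card:ℝ)^2) * (1 + Real.log A.card))^3 *
      (8 * (4 * (16384 * (((YY A).card:ℝ)^2 * EE A)^2) * (M:ℝ)^2))) ∨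
    ((A.card : ℝ) * (EE A / 4))^2 ≤
      ((A.card : ℝ)^3 + 3 * (16384 * (A.card : ℝ)^3) * (1 + Real.log A.card)
      + (81 * ((1 + A.card^2/p : ℕ) : ℝ))^2 * (A.card : ℝ)^2) * ((81 * ((1 + A.card^2/p : ℕ) : ℝ)) * (YY A).card^2 * EE A) := by
  classical
  by_cases hE : (EE A : ℝ) < 8 * (A.card : ℝ)^2
  · exact Or.inl hE
  right
  push Not at hE
  have hn0 : (8:ℝ) ≤ A.card := by exact_mod_cast hn
  have hEpos : (0:ℝ) < EE A := by nlinarith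
  have hEpos' : 0 < EE A := by exact_mod_cast hEpos
  have hTh : (Th p A.card : ℝ) = 81 * ((1 + A.card^2/p : ℕ) : ℝ) := by
    rw [Th]; push_cast; ring
  obtain ⟨D, hD⟩ : ∃ D, D = 524288 * A.card^3 / EE A := ⟨_, rfl⟩
  set M := Th p A.card + 1 + D with hM
  have hM2 : 524288 * (A.card:ℝ)^3 ≤ M * EE A := by
    have := Nat.lt_div_mul_add (a := 524288 * A.card^3) hEpos'
    rw [← hD] at this
    have h2 : 524288 * A.card^3 ≤ M * EE A := by
      rw [hM, add_mul, add_mul]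
      nlinarith [Nat.zero_le (Th p A.card * EE A)]
    exact_mod_cast h2
  have hM1 : (M:ℝ) * EE A ≤ 82 * ((1 + A.card^2/p : ℕ) : ℝ) * EE A + 524288 * (A.card : ℝ)^3 := by
    have h1 : 524288 * A.card^3 / EE A * EE A ≤ 524288 * A.card^3 := Nat.div_mul_le_self _ _
    rw [← hD] at h1
    have h2 : M * EE A ≤ 82 * (1 + A.card^2/p) * EE A + 524288 * A.card^3 := by
      have h3 : Th p A.card + 1 ≤ 82 * (1 + A.card^2/p) := by
        rw [Th]
        generalize A.card^2/p = x
        omega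
      calc M * EE A = (Th p A.card + 1) * EE A + D * EE A := by rw [hM]; ring
        _ ≤ _ := by gcongr
    exact_mod_cast h2
  obtain ⟨P, hP, hEP⟩ := decomp hA (by omega) hp M (by omega) (by omega)
  have hMpos : (0:ℝ) < M := by exact_mod_cast (by omega : 0 < M)
  have t1 : 4 * (16384 * (A.card : ℝ)^3) / M ≤ EE A / 8 := by
    rw [div_le_div_iff₀ hMpos (by norm_num)]
    linarith
  have t2 : (EE A : ℝ) / A.card ≤ EE A / 8 := by gcongr
  have t3 : (EE A : ℝ) / 2 ≤ ∑ q ∈ P, (rr A (q.1 - q.2) : ℝ) := by linarith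
  rw [← Finset.sum_filter_add_sum_filter_not P (fun q => Rich A.card (cls A.card ((1+q.1)/(1+q.2))))] at t3
  rcases le_or_gt ((EE A : ℝ) / 4) (∑ q ∈ P.filter (fun q => Rich A.card (cls A.card ((1+q.1)/(1+q.2)))), (rr A (q.1 - q.2) : ℝ)) with h | h
  · left
    refine ⟨M, hMpos.le, hM1, ?_⟩
    refine le_trans ?_ (rich_bound hA (by omega) hp M (P.filter (fun q => Rich A.card (cls A.card ((1+q.1)/(1+q.2)))))
      (fun q hq => (hP q (mem_filter.1 hq).1).1) (fun q hq => (mem_filter.1 hq).2) (fun q hq => (hP q (mem_filter.1 hq).1).2))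
    gcongr
  · right
    have h' : (EE A : ℝ) / 4 ≤ ∑ q ∈ P.filter (fun q => ¬ Rich A.card (cls A.card ((1+q.1)/(1+q.2)))), (rr A (q.1 - q.2) : ℝ) := by linarith
    have h2 := poor_bound hA (P.filter (fun q => ¬ Rich A.card (cls A.card ((1+q.1)/(1+q.2))))) (fun q hq => by
      obtain ⟨h3, h4⟩ := mem_filter.1 hq
      obtain ⟨⟨a1, a2, a3, a4, a5⟩, -⟩ := hP q h3
      exact ⟨a1, a2, a3, a4, a5, h4⟩)
    have h3 := E3_bound hA (by omega) hp
    rw [hTh] at h2 h3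
    refine le_trans ?_ (h2.trans (mul_le_mul_of_nonneg_right h3 (by positivity)))
    gcongr

end

theorem real1 (n t E l : ℝ) (hn : 8 ≤ n) (ht : 1 ≤ t) (hl : 1 ≤ l)
    (hE : n^3 ≤ 2 * t * E) (h : E < 8 * n^2) : n^6 ≤ 16777216 * l^3 * t^10 := by
  have h1 : n^2 * n ≤ n^2 * (16 * t) := by nlinarith
  have h2 : n ≤ 16 * t := le_of_mul_le_mul_left h1 (by positivity)
  calc n^6 ≤ (16*t)^6 := by gcongr
    _ = 16777216 * 1^3 * t^6 := by ring
    _ ≤ 16777216 * l^3 * t^10 := by gcongr; norm_num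

theorem real2 : ∃ K : ℝ, 0 < K ∧ ∀ (n t E l κ p M : ℝ), 8 ≤ n → 1 ≤ t → 1 ≤ l → 0 < E → 0 < p → 1 ≤ κ →
    n^3 ≤ 2 * t * E → κ * p ≤ p + n^2 → 0 ≤ M → M * E ≤ 82 * κ * E + 524288 * n^3 →
    (E/4)^6 ≤ (6 * (16384 * n^2) * l)^3 * (8 * (4 * (16384 * (t^2 * E)^2) * M^2)) →
    n^6 ≤ K * l^3 * t^10 ∨ p ≤ K * l * t^3 := by
  obtain ⟨c, hc⟩ : ∃ c : ℝ, c = 4^6 * (6 * 16384)^3 * 8 * 4 * 16384 := ⟨_, rfl⟩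
  have hc0 : 1 ≤ c := by rw [hc]; norm_num
  refine ⟨64 * c * 1048576^2, by positivity, ?_⟩
  intro n t E l κ p M hn ht hl hE hp hκ h1 h2 hM h3 h4
  have hn0 : 0 < n := by linarith
  have h5 : E^6 ≤ c * n^6 * l^3 * t^4 * (M * E)^2 := by
    have : E^6 = 4^6 * (E/4)^6 := by ring
    rw [this]
    calc _ ≤ 4^6 * ((6 * (16384 * n^2) * l)^3 * (8 * (4 * (16384 * (t^2 * E)^2) * M^2))) := by gcongr
      _ = _ := by rw [hc]; ring
  rcases le_total (82 * κ * E) (524288 * n^3) with h6 | h6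
  · left
    have h7 : M * E ≤ 1048576 * n^3 := by linarith
    have h8 : E^6 ≤ c * n^6 * l^3 * t^4 * (1048576 * n^3)^2 := h5.trans (by gcongr)
    have h9 : n^12 * n^6 ≤ n^12 * (64 * c * 1048576^2 * l^3 * t^10) := by
      calc n^12 * n^6 = (n^3)^6 := by ring
        _ ≤ (2 * t * E)^6 := by gcongr
        _ = 64 * t^6 * E^6 := by ring
        _ ≤ 64 * t^6 * (c * n^6 * l^3 * t^4 * (1048576 * n^3)^2) := by gcongr
        _ = _ := by ring
    exact le_of_mul_le_mul_left h9 (by positivity)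
  · have h7 : M * E ≤ 164 * κ * E := by linarith
    have h8 : E^2 * E^4 ≤ E^2 * (26896 * c * n^6 * l^3 * t^4 * κ^2) := by
      calc E^2 * E^4 = E^6 := by ring
        _ ≤ c * n^6 * l^3 * t^4 * (164 * κ * E)^2 := h5.trans (by gcongr)
        _ = _ := by ring
    have h9 : E^4 ≤ 26896 * c * n^6 * l^3 * t^4 * κ^2 := le_of_mul_le_mul_left h8 (by positivity)
    have h10 : n^6 * n^6 ≤ n^6 * (430336 * c * l^3 * t^8 * κ^2) := by
      calc n^6 * n^6 = (n^3)^4 := by ring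
        _ ≤ (2 * t * E)^4 := by gcongr
        _ = 16 * t^4 * E^4 := by ring
        _ ≤ 16 * t^4 * (26896 * c * n^6 * l^3 * t^4 * κ^2) := by gcongr
        _ = _ := by ring
    have h11 : n^6 ≤ 430336 * c * l^3 * t^8 * κ^2 := le_of_mul_le_mul_left h10 (by positivity)
    rcases le_total (n^2) p with h12 | h12
    · left
      have h13 : κ ≤ 2 := by
        refine le_of_mul_le_mul_right ?_ hp
        linarith
      calc n^6 ≤ 430336 * c * l^3 * t^8 * 2^2 := h11.trans (by gcongr)
        _ = 1721344 * c * l^3 * t^8 := by ring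
        _ ≤ 64 * c * 1048576^2 * l^3 * t^10 := by
          have : 1721344 * c ≤ 64 * c * 1048576^2 := by linarith
          gcongr
          norm_num
    · right
      have h13 : κ * p ≤ 2 * n^2 := by linarith
      have h14 : n^4 * (n^2 * p^2) ≤ n^4 * (1721344 * c * l^3 * t^8) := by
        calc n^4 * (n^2 * p^2) = n^6 * p^2 := by ring
          _ ≤ 430336 * c * l^3 * t^8 * κ^2 * p^2 := by gcongr
          _ = 430336 * c * l^3 * t^8 * (κ * p)^2 := by ring
          _ ≤ 430336 * c * l^3 * t^8 * (2 * n^2)^2 := by gcongr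
          _ = _ := by ring
      have h15 := le_of_mul_le_mul_left h14 (by positivity)
      have h16 : p^3 ≤ (1721344 * c * l * t^3)^3 := by
        calc p^3 = p * p^2 := by ring
          _ ≤ n^2 * p^2 := by gcongr
          _ ≤ 1721344 * c * l^3 * t^8 := h15
          _ ≤ (1721344 * c)^3 * l^3 * t^9 := by
            have : 1721344 * c ≤ (1721344 * c)^3 := le_self_pow₀ (by linarith) (by norm_num)
            gcongr
            norm_num
          _ = _ := by ring
      have h17 := le_of_pow_le_pow_left₀ (by norm_num) (by positivity) h16
      refine h17.trans ?_
      have : 1721344 * c ≤ 64 * c * 1048576^2 := by linarith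
      gcongr

theorem real3 (C : ℝ) (hC : 0 < C) : ∃ K : ℝ, 0 < K ∧ ∀ (n t E l κ p : ℝ), 8 ≤ n → 1 ≤ t → 1 ≤ l → 0 < E → 0 < p → 1 ≤ κ →
    n^3 ≤ 2 * t * E → κ * p ≤ p + n^2 → n^3 ≤ C * p^2 →
    (n * (E/4))^2 ≤ (n^3 + 3 * (16384 * n^3) * l + (81 * κ)^2 * n^2) * ((81 * κ) * t^2 * E) →
    n^6 ≤ K * l^3 * t^10 ∨ p ≤ K * l * t^3 := by
  obtain ⟨c, hc⟩ : ∃ c : ℝ, c = 16 * 81 * (1 + 49152 + 6561 * (2 + 2 * C)) := ⟨_, rfl⟩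
  have hc0 : 1 ≤ c := by rw [hc]; linarith
  refine ⟨(4 * c)^3, by positivity, ?_⟩
  intro n t E l κ p hn ht hl hE hp hκ h1 h2 h3 h4
  have hn0 : 0 < n := by linarith
  have h5 : κ^2 ≤ 2 + 2 * C * n := by
    have e1 : (κ * p)^2 ≤ (p + n^2)^2 := by gcongr
    have e2 : (p + n^2)^2 ≤ 2 * p^2 + 2 * n^4 := by nlinarith [sq_nonneg (p - n^2)]
    have e3 : n^4 ≤ C * n * p^2 := by
      calc n^4 = n * n^3 := by ring
        _ ≤ n * (C * p^2) := by gcongr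
        _ = _ := by ring
    have e4 : κ^2 * p^2 ≤ (2 + 2 * C * n) * p^2 := by nlinarith
    exact le_of_mul_le_mul_right e4 (by positivity)
  have h6 : n^3 + 3 * (16384 * n^3) * l + (81 * κ)^2 * n^2 ≤ (1 + 49152 + 6561 * (2 + 2 * C)) * n^3 * l := by
    have e1 : n^3 ≤ n^3 * l := le_mul_of_one_le_right (by positivity) hl
    have e2 : (81 * κ)^2 * n^2 ≤ 6561 * (2 + 2 * C) * (n^3 * l) := by
      calc (81 * κ)^2 * n^2 = 6561 * n^2 * κ^2 := by ring
        _ ≤ 6561 * n^2 * (2 + 2 * C * n) := by gcongr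
        _ ≤ 6561 * n^2 * (2 * n + 2 * C * n) := by gcongr; linarith
        _ = 6561 * (2 + 2 * C) * n^3 := by ring
        _ ≤ _ := by gcongr
    linarith
  have h7 : n^2 * E * E ≤ n^2 * E * (c * n * l * κ * t^2) := by
    calc n^2 * E * E = 16 * (n * (E/4))^2 := by ring
      _ ≤ 16 * (((1 + 49152 + 6561 * (2 + 2 * C)) * n^3 * l) * ((81 * κ) * t^2 * E)) := by
        refine mul_le_mul_of_nonneg_left (h4.trans ?_) (by norm_num)
        gcongr
      _ = _ := by rw [hc]; ring
  have h8 : E ≤ c * n * l * κ * t^2 := le_of_mul_le_mul_left h7 (by positivity)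
  have h9 : n * n^2 ≤ n * (2 * c * l * κ * t^3) := by
    calc n * n^2 = n^3 := by ring
      _ ≤ 2 * t * E := h1
      _ ≤ 2 * t * (c * n * l * κ * t^2) := by gcongr
      _ = _ := by ring
  have h10 := le_of_mul_le_mul_left h9 hn0
  rcases le_total (n^2) p with h12 | h12
  · left
    have h13 : κ ≤ 2 := by
      refine le_of_mul_le_mul_right ?_ hp
      linarith
    have h14 : n^2 ≤ 4 * c * l * t^3 := by
      calc n^2 ≤ 2 * c * l * 2 * t^3 := h10.trans (by gcongr)
        _ = _ := by ring
    calc n^6 = (n^2)^3 := by ring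
      _ ≤ (4 * c * l * t^3)^3 := by gcongr
      _ = (4 * c)^3 * l^3 * t^9 := by ring
      _ ≤ _ := by gcongr; norm_num
  · right
    have h13 : κ * p ≤ 2 * n^2 := by linarith
    have h14 : n^2 * p ≤ n^2 * (4 * c * l * t^3) := by
      calc n^2 * p ≤ 2 * c * l * κ * t^3 * p := by gcongr
        _ = 2 * c * l * t^3 * (κ * p) := by ring
        _ ≤ 2 * c * l * t^3 * (2 * n^2) := by gcongr
        _ = _ := by ring
    have h15 := le_of_mul_le_mul_left h14 (by positivity)
    refine h15.trans ?_
    have : 4 * c ≤ (4 * c)^3 := le_self_pow₀ (by linarith) (by norm_num)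
    gcongr

theorem zmod2_eq : ∀ x : ZMod 2, x ≠ 0 → x = 1 := by decide

theorem dich (C : ℝ) (hC : 0 < C) : ∃ K : ℝ, 0 < K ∧ ∀ (p : ℕ) [Fact p.Prime] (A : Finset (ZMod p)),
    mulSubgroup p A → 2 ≤ A.card → (A.card : ℝ)^3 ≤ C * (p:ℝ)^2 →
    1 ≤ (YY A).card ∧ ((A.card : ℝ)^6 ≤ K * (1 + Real.log A.card)^3 * ((YY A).card : ℝ)^10 ∨
      (p : ℝ) ≤ K * (1 + Real.log A.card) * ((YY A).card:ℝ)^3) := by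
  obtain ⟨K2, hK2, h2⟩ := real2
  obtain ⟨K3, hK3, h3⟩ := real3 C hC
  have hb : ∃ K1 : ℝ, K1 = 16^3 * C^4 := ⟨_, rfl⟩
  obtain ⟨K1, hK1⟩ := hb
  have hK10 : 0 < K1 := by rw [hK1]; positivity
  refine ⟨16777216 + K1 + K2 + K3, by positivity, ?_⟩
  intro p hpp A hA hn2 hCn
  have hprime : p.Prime := Fact.out
  have hp0 : (0:ℝ) < p := by exact_mod_cast hprime.pos
  have ht : 1 ≤ (YY A).card := by
    have hp2 : p ≠ 2 := by
      intro h
      subst h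
      have : A ⊆ {1} := by
        intro x hx
        have h0 := ne_zero_of_mem hA hx
        rw [mem_singleton]
        exact zmod2_eq x h0
      have := Finset.card_le_card this
      rw [Finset.card_singleton] at this
      omega
    have h11 : (1:ZMod p) + 1 ≠ 0 := by
      intro h
      have h' : ((2:ℕ) : ZMod p) = 0 := by push_cast; rw [← h]; norm_num
      rw [ZMod.natCast_eq_zero_iff] at h'
      exact hp2 ((Nat.prime_dvd_prime_iff_eq hprime Nat.prime_two).1 h')
    apply Finset.card_pos.2
    exact ⟨_, Finset.mem_image_of_mem _ (mem_erase.2 ⟨h11, Finset.add_mem_add hA.2.1 hA.2.1⟩)⟩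
  refine ⟨ht, ?_⟩
  have htr : (1:ℝ) ≤ (YY A).card := by exact_mod_cast ht
  have hl : 1 ≤ 1 + Real.log A.card := by linarith [Real.log_natCast_nonneg A.card]
  have fin : ∀ K, 0 < K → K ≤ 16777216 + K1 + K2 + K3 →
     ((A.card : ℝ)^6 ≤ K * (1 + Real.log A.card)^3 * ((YY A).card : ℝ)^10 ∨
      (p : ℝ) ≤ K * (1 + Real.log A.card) * ((YY A).card:ℝ)^3) → 
     ((A.card : ℝ)^6 ≤ (16777216 + K1 + K2 + K3) * (1 + Real.log A.card)^3 * ((YY A).card : ℝ)^10 ∨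
      (p : ℝ) ≤ (16777216 + K1 + K2 + K3) * (1 + Real.log A.card) * ((YY A).card:ℝ)^3) := by
    intro K hK0 hK h
    rcases h with h | h
    · left; refine h.trans ?_; gcongr
    · right; refine h.trans ?_; gcongr
  by_cases hn : 8 ≤ A.card
  swap
  · apply fin 16777216 (by norm_num) (by linarith)
    left
    have h7 : (A.card : ℝ) ≤ 8 := by exact_mod_cast (by omega : A.card ≤ 8)
    calc (A.card:ℝ)^6 ≤ 8^6 := by gcongr
      _ ≤ 16777216 * 1^3 * 1^10 := by norm_num
      _ ≤ _ := by gcongr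
  by_cases hp : 16 * A.card^4 ≤ p^3
  swap
  · apply fin K1 hK10 (by linarith)
    right
    have h7 : (p:ℝ)^3 ≤ 16 * (A.card:ℝ)^4 := by exact_mod_cast (not_le.1 hp).le
    have h8 : (p:ℝ)^8 * p ≤ (p:ℝ)^8 * K1 := by
      calc (p:ℝ)^8 * p = ((p:ℝ)^3)^3 := by ring
        _ ≤ (16 * (A.card:ℝ)^4)^3 := by gcongr
        _ = 16^3 * ((A.card:ℝ)^3)^4 := by ring
        _ ≤ 16^3 * (C * (p:ℝ)^2)^4 := by gcongr
        _ = _ := by rw [hK1]; ring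
    have h9 := le_of_mul_le_mul_left h8 (by positivity)
    calc (p:ℝ) ≤ K1 * 1 * 1^3 := by linarith
      _ ≤ _ := by gcongr
  have hn' : (8:ℝ) ≤ A.card := by exact_mod_cast hn
  have hE1 : (A.card:ℝ)^3 ≤ 2 * (YY A).card * EE A := by
    have e1 := cs_energy (A := A)
    have e2 : ((A + A).card : ℝ) ≤ A.card * (YY A).card + 1 := by exact_mod_cast card_add_le hA
    have e3 : (A.card:ℝ) * (A.card:ℝ)^3 ≤ A.card * (2 * (YY A).card * EE A) := by
      calc (A.card:ℝ) * (A.card:ℝ)^3 = (A.card:ℝ)^4 := by ring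
        _ ≤ ((A + A).card : ℝ) * (EE A : ℝ) := e1
        _ ≤ ((A.card : ℝ) * ((YY A).card : ℝ) + 1) * (EE A : ℝ) := by gcongr
        _ ≤ ((A.card : ℝ) * ((YY A).card : ℝ) + (A.card : ℝ) * ((YY A).card : ℝ)) * (EE A : ℝ) := by
          gcongr; nlinarith
        _ = _ := by ring
    exact le_of_mul_le_mul_left e3 (by linarith)
  have hEpos : (0:ℝ) < EE A := by
    by_contra h
    have h0 : (EE A : ℝ) = 0 := le_antisymm (not_lt.1 h) (Nat.cast_nonneg _)
    rw [h0] at hE1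
    have : (0:ℝ) < (A.card:ℝ)^3 := by positivity
    linarith
  have hκ1 : (1:ℝ) ≤ ((1 + A.card^2/p : ℕ) : ℝ) := by exact_mod_cast Nat.le_add_right 1 _
  have hκ2 : ((1 + A.card^2/p : ℕ) : ℝ) * p ≤ p + (A.card:ℝ)^2 := by
    have : (1 + A.card^2/p) * p ≤ p + A.card^2 := by
      rw [add_mul, one_mul]
      exact Nat.add_le_add_left (Nat.div_mul_le_self _ _) _
    exact_mod_cast this
  rcases core hA hn hp with h | ⟨M, hM0, hM, h⟩ | h
  · apply fin 16777216 (by norm_num) (by linarith)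
    left
    exact real1 _ _ _ _ hn' htr hl hE1 h
  · apply fin K2 hK2 (by linarith)
    exact h2 _ _ _ _ _ _ _ hn' htr hl hEpos hp0 hκ1 hE1 hκ2 hM0 hM h
  · apply fin K3 hK3 (by linarith)
    exact h3 _ _ _ _ _ _ hn' htr hl hEpos hp0 hκ1 hE1 hκ2 hCn h

end Stmt6


namespace Stmt6

theorem fin1 (K n l t : ℝ) (hK : 0 < K) (hn : 0 < n) (hl : 0 < l) (ht : 0 < t) (h : n^6 ≤ K * l^3 * t^10) :
    K ^ (-(1:ℝ)/10) * (n ^ ((3:ℝ)/5) * l ^ (-(3:ℝ)/10)) ≤ t := by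
  have h1 : (n^6) ^ ((1:ℝ)/10) ≤ (K * l^3 * t^10) ^ ((1:ℝ)/10) := by gcongr
  rw [Real.mul_rpow (by positivity) (by positivity), Real.mul_rpow (by positivity) (by positivity)] at h1
  rw [← Real.rpow_natCast, ← Real.rpow_natCast, ← Real.rpow_natCast, ← Real.rpow_mul hn.le, ← Real.rpow_mul hl.le,
    ← Real.rpow_mul ht.le] at h1
  norm_num at h1
  have e1 : K ^ (-(1:ℝ)/10) = (K ^ ((1:ℝ)/10))⁻¹ := by rw [← Real.rpow_neg hK.le]; norm_num
  have e2 : l ^ (-(3:ℝ)/10) = (l ^ ((3:ℝ)/10))⁻¹ := by rw [← Real.rpow_neg hl.le]; norm_num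
  rw [e1, e2]
  have p1 : 0 < K ^ ((1:ℝ)/10) := by positivity
  have p2 : 0 < l ^ ((3:ℝ)/10) := by positivity
  rw [inv_mul_le_iff₀ p1, mul_inv_le_iff₀ p2]
  linarith

theorem fin2 (K p l t : ℝ) (hK : 0 < K) (hp : 0 < p) (hl : 0 < l) (ht : 0 < t) (h : p ≤ K * l * t^3) :
    K ^ (-(1:ℝ)/3) * (p ^ ((1:ℝ)/3) * l ^ (-(1:ℝ)/3)) ≤ t := by
  have h1 : p ^ ((1:ℝ)/3) ≤ (K * l * t^3) ^ ((1:ℝ)/3) := by gcongr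
  rw [Real.mul_rpow (by positivity) (by positivity), Real.mul_rpow (by positivity) (by positivity)] at h1
  rw [← Real.rpow_natCast, ← Real.rpow_mul ht.le] at h1
  norm_num at h1
  have e1 : K ^ (-(1:ℝ)/3) = (K ^ ((1:ℝ)/3))⁻¹ := by rw [← Real.rpow_neg hK.le]; norm_num
  have e2 : l ^ (-(1:ℝ)/3) = (l ^ ((1:ℝ)/3))⁻¹ := by rw [← Real.rpow_neg hl.le]; norm_num
  rw [e1, e2]
  have p1 : 0 < K ^ ((1:ℝ)/3) := by positivity
  have p2 : 0 < l ^ ((1:ℝ)/3) := by positivity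
  rw [inv_mul_le_iff₀ p1, mul_inv_le_iff₀ p2]
  linarith

theorem region (p l : ℝ) (hp : 0 < p) (hl : 0 < l) :
    (p ^ ((5:ℝ)/9) * l ^ (-(1:ℝ)/18)) ^ ((3:ℝ)/5) * l ^ (-(3:ℝ)/10) = p ^ ((1:ℝ)/3) * l ^ (-(1:ℝ)/3) := by
  rw [Real.mul_rpow (by positivity) (by positivity), ← Real.rpow_mul hp.le, ← Real.rpow_mul hl.le, mul_assoc,
    ← Real.rpow_add hl]
  norm_num

end Stmt6

theorem stmt6 :
    ∀ C₀ : ℝ, 0 < C₀ → ∃ c C₁ C₂ : ℝ, 0 < c ∧ 0 < C₁ ∧ 0 < C₂ ∧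
      ∀ (p : ℕ) [NeZero p], p.Prime →
        ∀ A : Finset (ZMod p), mulSubgroup p A →
          (A.card : ℝ) ≤ C₀ * (p : ℝ) ^ ((2 : ℝ) / 3) →
          ((A.card : ℝ) ≤ c * (p : ℝ) ^ ((5 : ℝ) / 9) * Real.log A.card ^ (-(1 : ℝ) / 18) →
            ((A + A).card : ℝ) ≥
              C₁ * (A.card : ℝ) ^ ((8 : ℝ) / 5) * Real.log A.card ^ (-(3 : ℝ) / 10)) ∧
          ((A.card : ℝ) ≥ c * (p : ℝ) ^ ((5 : ℝ) / 9) * Real.log A.card ^ (-(1 : ℝ) / 18) →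
            ((A + A).card : ℝ) ≥
              C₂ * (A.card : ℝ) * (p : ℝ) ^ ((1 : ℝ) / 3) * Real.log A.card ^ (-(1 : ℝ) / 3)) := by
  intro C₀ hC₀
  obtain ⟨K, hK, hd⟩ := Stmt6.dich (C₀^3) (by positivity)
  set d : ℝ := min ((27 * K) ^ (-(1:ℝ)/10)) ((3 * K) ^ (-(1:ℝ)/3)) with hdef
  have hd0 : 0 < d := lt_min (by positivity) (by positivity)
  refine ⟨1, d, d, one_pos, hd0, hd0, ?_⟩
  intro p _ hp A hA hAp
  haveI : Fact p.Prime := ⟨hp⟩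
  have hnpos : 0 < A.card := Stmt6.card_pos hA
  rcases (by omega : A.card = 1 ∨ 2 ≤ A.card) with h1 | h2
  · rw [h1]
    simp only [Nat.cast_one, Real.log_one]
    rw [Real.zero_rpow (by norm_num : (-(3:ℝ)/10) ≠ 0), Real.zero_rpow (by norm_num : (-(1:ℝ)/3) ≠ 0)]
    simp
  have hp0 : (0:ℝ) < p := by exact_mod_cast hp.pos
  have hcube : (A.card : ℝ)^3 ≤ C₀^3 * (p:ℝ)^2 := by
    calc (A.card : ℝ)^3 ≤ (C₀ * (p : ℝ) ^ ((2 : ℝ) / 3))^3 := by gcongr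
      _ = C₀^3 * (p:ℝ)^2 := by
        rw [mul_pow, ← Real.rpow_natCast ((p:ℝ) ^ ((2 : ℝ) / 3)), ← Real.rpow_mul hp0.le]
        norm_num
  obtain ⟨ht, hdi⟩ := hd p A hA h2 hcube
  have hsum : (A.card : ℝ) * ((Stmt6.YY A).card : ℝ) ≤ ((A + A).card : ℝ) := by
    exact_mod_cast Stmt6.card_le_YY hA
  have hn2 : (2:ℝ) ≤ A.card := by exact_mod_cast h2
  have hlog : Real.log 2 ≤ Real.log A.card := Real.log_le_log (by norm_num) hn2
  have hl2 := Real.log_two_gt_d9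
  generalize (A.card : ℝ) = n at *
  generalize ((A + A).card : ℝ) = s at *
  have ht' : (0:ℝ) < (Stmt6.YY A).card := by exact_mod_cast ht
  generalize ((Stmt6.YY A).card : ℝ) = t at *
  have hl0 : 0 < Real.log n := by linarith
  have hl3 : 1 + Real.log n ≤ 3 * Real.log n := by linarith
  generalize Real.log n = l at *
  generalize (p:ℝ) = q at *
  have hn0 : 0 < n := by linarith
  have e85 : n ^ ((8:ℝ)/5) = n * n ^ ((3:ℝ)/5) := by
    rw [← Real.rpow_one_add' hn0.le (by norm_num)]
    norm_num
  have hmin : d * min (n ^ ((3:ℝ)/5) * l ^ (-(3:ℝ)/10)) (q ^ ((1:ℝ)/3) * l ^ (-(1:ℝ)/3)) ≤ t := by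
    rcases hdi with h | h
    · have h' : n^6 ≤ (27 * K) * l^3 * t^10 := by
        calc n^6 ≤ K * (1 + l)^3 * t^10 := h
          _ ≤ K * (3 * l)^3 * t^10 := by gcongr
          _ = _ := by ring
      refine le_trans ?_ (Stmt6.fin1 (27 * K) n l t (by positivity) hn0 hl0 ht' h')
      gcongr
      · exact min_le_left _ _
      · exact min_le_left _ _
    · have h' : q ≤ (3 * K) * l * t^3 := by
        calc q ≤ K * (1 + l) * t^3 := h
          _ ≤ K * (3 * l) * t^3 := by gcongr
          _ = _ := by ring
      refine le_trans ?_ (Stmt6.fin2 (3 * K) q l t (by positivity) hp0 hl0 ht' h')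
      gcongr
      · exact min_le_right _ _
      · exact min_le_right _ _
  have hreg := Stmt6.region q l hp0 hl0
  constructor
  · intro h
    rw [one_mul] at h
    have h3 : n ^ ((3:ℝ)/5) * l ^ (-(3:ℝ)/10) ≤ q ^ ((1:ℝ)/3) * l ^ (-(1:ℝ)/3) := by
      rw [← hreg]; gcongr
    rw [min_eq_left h3] at hmin
    calc s ≥ n * t := hsum
      _ ≥ n * (d * (n ^ ((3:ℝ)/5) * l ^ (-(3:ℝ)/10))) := by gcongr
      _ = _ := by rw [e85]; ring
  · intro h
    rw [one_mul] at h
    have h3 : q ^ ((1:ℝ)/3) * l ^ (-(1:ℝ)/3) ≤ n ^ ((3:ℝ)/5) * l ^ (-(3:ℝ)/10) := by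
      rw [← hreg]
      have : q ^ ((5:ℝ)/9) * l ^ (-(1:ℝ)/18) ≤ n := h
      gcongr
    rw [min_eq_right h3] at hmin
    calc s ≥ n * t := hsum
      _ ≥ n * (d * (q ^ ((1:ℝ)/3) * l ^ (-(1:ℝ)/3))) := by gcongr
      _ = _ := by ring
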